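/- Assume q < |a_1⋯a_{n+1} b_1⋯b_{n+1}|, and let x ∈ (ℂ^*)ⁿ satisfy x_i/x_j ∉ qᶻ for 1 ≤ i < j ≤ n and x_i · (x_1⋯x_n) · d⁻¹ ∉ qᶻ for 1 ≤ i ≤ n. Then 𝒦(x) = 𝒦₀(x) · (q a_1⁻¹⋯a_{n+1}⁻¹ d)_∞ (q b_1⁻¹⋯b_{n+1}⁻¹ d⁻¹)_∞ ∏_{i=1}^{n+1} ∏_{j=1}^{n+1} (q a_i⁻¹ b_j⁻¹)_∞ / (q a_1⁻¹⋯a_{n+1}⁻¹ b_1⁻¹⋯b_{n+1}⁻¹)_∞, where 𝒦₀(x) := (1−q)ⁿ Σ_{ν∈ℤⁿ} 1 / ∏_{1≤i<j≤n+1} (q z_i/z_j)_∞ (q z_j/z_i)_∞; moreover 𝒦₀(x) = (1−q)ⁿ (q)_∞ⁿ (the Macdonald identity for A_n^{(1)} in Milne's form). (Corollary 5.7 of the paper.) -/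

import Mathlib

/-!
The parameters are replaced by their inverses, so that `0` becomes an admissible value. With
`A = ∏ a_j`, `B = ∏ b_j` and `d = ∏ X_i`, let `FF(a, b)` be the sum over the lattice points
`z = (X_i q^{λ_i})`, `∑ λ_i = 0`, of `ff = ∏_{i,j} (q a_j z_i)_∞ (q b_j / z_i)_∞ / dn(z)`.

Write `ff = Phi · Δ(z)`, where `Δ` is the Vandermonde determinant. The shift `z_i ↦ q z_i`,
`z_j ↦ z_j / q` preserves the lattice, and `Phi_rt` describes its effect on `Phi`: with
`α(u) = ∏ (1 - a_k u)` and `β(u) = ∏ (u - b_k)`, the sums of `Phi α(z_i) β(z_j) g` and of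
`Phi β(z_i) α(z_j) g` agree whenever `g` depends only on the other variables. Hence the sum of
`Phi · det[w_k(z_i)]` vanishes for all polynomials `w_k` of degree at most `n + 1` two of which are
`α` and `β` (`tsum_det_eq_zero`). Now `det[w_k(z_i)]` equals `Δ(z)` times the determinant of the
coefficients of `∏_j (z_j - u), w_1, …, w_{n+1}` (`det_evalv`). So the determinant with rows
`P, α, β, …` vanishes, where `P(u) = ∑ ff ∏_j (z_j - u)` and the remaining rows are arbitrary, and
`P` is a linear combination of `α` and `β`. Comparing the constant and leading coefficients and the
values at `u = 1 / a_{j₀}` gives (`FF_relation`)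

  `(1 - A B) ∑ ff ∏_i (1 - a_{j₀} z_i) = (1 - A d) ∏_j (1 - a_{j₀} b_j) FF(a, b)`,

which is a `q`-difference equation for `FF` in `a_{j₀}` (`FF_shift`). Iterating it, with dominated
convergence, sends `a_{j₀}` to `0` (`FF_zero_one`). Removing the `a_j` one by one, and then the
`b_j` by the reflection `z ↦ z⁻¹`, gives `FF(a, b)` in terms of `FF(0, 0)` (`FF_eval`). Finally, for
`a_i = 1 / X_i` and `b = 0` only the term `λ = 0` survives (`FF_single`), and `FF_eval` then yields
the Macdonald identity `FF(0, 0) = (q)_∞ⁿ`.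

Summability rests on the quasi-periodicity of `eP = Δ · dn`, by which `1 / eP` splits on the lattice
into Gaussian factors in the single variables (`eP_closed`, `summable_maj`).
-/

open scoped BigOperators
open Finset

/-- The infinite q-Pochhammer symbol `(a)_∞ = ∏_{i=0}^∞ (1 - qⁱ a)`. -/
noncomputable def qp (q a : ℂ) : ℂ := ∏' i : ℕ, (1 - q ^ i * a)

/-- The point `z = (x₁qᵛ¹,…,x_nqᵛⁿ, d z₁⁻¹⋯z_n⁻¹)` of the Gustafson lattice. -/
noncomputable def gz {n : ℕ} (q d : ℂ) (x : Fin n → ℂ) (ν : Fin n → ℤ) : Fin (n + 1) → ℂ :=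
  Fin.snoc (fun k => x k * q ^ ν k) (d * (∏ k, x k * q ^ ν k)⁻¹)

/-- Summand of the regularized Jackson integral of Gustafson's `A_n` type. -/
noncomputable def gRegTerm {n : ℕ} (q d : ℂ) (a b : Fin (n + 1) → ℂ) (x : Fin n → ℂ)
    (ν : Fin n → ℤ) : ℂ :=
  (∏ i, ∏ j, qp q (q * (a j)⁻¹ * gz q d x ν i) * qp q (q * (b j)⁻¹ * (gz q d x ν i)⁻¹)) /
    ∏ i, ∏ j ∈ Finset.Ioi i, qp q (q * gz q d x ν i / gz q d x ν j) *
      qp q (q * gz q d x ν j / gz q d x ν i)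

/-- The regularized Jackson integral of Gustafson's `A_n` type `𝒦(x)`. -/
noncomputable def gReg {n : ℕ} (q d : ℂ) (a b : Fin (n + 1) → ℂ) (x : Fin n → ℂ) : ℂ :=
  (1 - q) ^ n * ∑' ν : Fin n → ℤ, gRegTerm q d a b x ν

/-- Summand of the Macdonald-identity sum `𝒦₀(x)`. -/
noncomputable def g0Term {n : ℕ} (q d : ℂ) (x : Fin n → ℂ) (ν : Fin n → ℤ) : ℂ :=
  (∏ i, ∏ j ∈ Finset.Ioi i, qp q (q * gz q d x ν i / gz q d x ν j) *
      qp q (q * gz q d x ν j / gz q d x ν i))⁻¹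

/-- The sum `𝒦₀(x)` of the Macdonald identity for `A_n⁽¹⁾`. -/
noncomputable def g0Sum {n : ℕ} (q d : ℂ) (x : Fin n → ℂ) : ℂ :=
  (1 - q) ^ n * ∑' ν : Fin n → ℤ, g0Term q d x ν

/-! ### The infinite q-Pochhammer symbol and its real majorant -/

section Pochhammer

open Filter Topology

/-- The majorant `∏_{i≥0} (1 + qⁱ t)` of `|(w)_∞|` for `|w| ≤ t`. -/
noncomputable def mq (q t : ℝ) : ℝ := ∏' i : ℕ, (1 + q ^ i * t)

variable {q : ℝ}

lemma summable_qw (hq0 : 0 < q) (hq1 : q < 1) (w : ℂ) :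
    Summable fun i : ℕ => ‖-((q : ℂ) ^ i * w)‖ := by
  simp only [norm_neg, norm_mul, norm_pow, Complex.norm_real, Real.norm_eq_abs, abs_of_pos hq0]
  exact (summable_geometric_of_lt_one hq0.le hq1).mul_right _

lemma multipliable_qp (hq0 : 0 < q) (hq1 : q < 1) (w : ℂ) :
    Multipliable fun i : ℕ => (1 - (q : ℂ) ^ i * w) := by
  simpa only [sub_eq_add_neg] using multipliable_one_add_of_summable (summable_qw hq0 hq1 w)

lemma multipliable_mq (hq0 : 0 < q) (hq1 : q < 1) (t : ℝ) :
    Multipliable fun i : ℕ => (1 + q ^ i * t) :=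
  Real.multipliable_one_add_of_summable ((summable_geometric_of_lt_one hq0.le hq1).mul_right _)

lemma qp_step (hq0 : 0 < q) (hq1 : q < 1) (w : ℂ) :
    qp q w = (1 - w) * qp q (q * w) := by
  have h := multipliable_qp hq0 hq1 (q * w)
  unfold qp
  rw [tprod_eq_zero_mul']
  · simp only [pow_zero, one_mul, pow_succ, mul_assoc]
  · simpa only [pow_succ, mul_assoc] using h

lemma mq_step (hq0 : 0 < q) (hq1 : q < 1) (t : ℝ) :
    mq q t = (1 + t) * mq q (q * t) := by
  have h := multipliable_mq hq0 hq1 (q * t)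
  unfold mq
  rw [tprod_eq_zero_mul']
  · simp only [pow_zero, one_mul, pow_succ, mul_assoc]
  · simpa only [pow_succ, mul_assoc] using h

lemma qp_zero (q : ℂ) : qp q 0 = 1 := by simp [qp]

lemma qp_ne_zero (hq0 : 0 < q) (hq1 : q < 1) (w : ℂ) (h : ∀ i : ℕ, (q : ℂ) ^ i * w ≠ 1) :
    qp q w ≠ 0 := by
  have := tprod_one_add_ne_zero_of_summable (f := fun i : ℕ => -((q : ℂ) ^ i * w))
    (fun i hi => h i (by linear_combination -hi)) (summable_qw hq0 hq1 w)
  simpa only [← sub_eq_add_neg, qp] using this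

lemma qp_ne_zero_of_norm_lt (hq0 : 0 < q) (hq1 : q < 1) (w : ℂ) (h : ‖w‖ < 1) :
    qp q w ≠ 0 := by
  refine qp_ne_zero hq0 hq1 w fun i hi => ?_
  have h1 : ‖(q : ℂ) ^ i * w‖ = 1 := by rw [hi]; simp
  rw [norm_mul, norm_pow, Complex.norm_real, Real.norm_eq_abs, abs_of_pos hq0] at h1
  have h2 : q ^ i ≤ 1 := pow_le_one₀ hq0.le hq1.le
  nlinarith [norm_nonneg w]

lemma norm_qp_le (hq0 : 0 < q) (hq1 : q < 1) {w : ℂ} {t : ℝ} (h : ‖w‖ ≤ t) :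
    ‖qp q w‖ ≤ mq q t := by
  have h1 := (multipliable_qp hq0 hq1 w).hasProd.tendsto_prod_nat.norm
  have h2 := (multipliable_mq hq0 hq1 t).hasProd.tendsto_prod_nat
  refine le_of_tendsto_of_tendsto' h1 h2 fun k => ?_
  rw [norm_prod]
  refine Finset.prod_le_prod (fun _ _ => norm_nonneg _) fun i _ => ?_
  refine (norm_sub_le _ _).trans ?_
  rw [norm_mul, norm_pow, Complex.norm_real, Real.norm_eq_abs, abs_of_pos hq0, norm_one]
  gcongr

lemma mq_pos (hq0 : 0 < q) (hq1 : q < 1) {t : ℝ} (ht : 0 ≤ t) : 0 < mq q t := by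
  refine lt_of_lt_of_le one_pos ?_
  refine ge_of_tendsto' (multipliable_mq hq0 hq1 t).hasProd.tendsto_prod_nat fun k => ?_
  refine Finset.prod_induction _ (1 ≤ ·) (fun _ _ => one_le_mul_of_one_le_of_one_le) le_rfl
    fun i _ => ?_
  have := mul_nonneg (pow_nonneg hq0.le i) ht
  linarith

lemma norm_qp_sub_one_le (hq0 : 0 < q) (hq1 : q < 1) (w : ℂ) :
    ‖qp q w - 1‖ ≤ Real.exp ((1 - q)⁻¹ * ‖w‖) - 1 := by
  have h1 := ((multipliable_qp hq0 hq1 w).hasProd.tendsto_prod_nat.sub_const 1).norm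
  refine le_of_tendsto' h1 fun k => ?_
  have h2 := Finset.norm_prod_one_add_sub_one_le (Finset.range k) fun i : ℕ => -((q : ℂ) ^ i * w)
  simp only [← sub_eq_add_neg] at h2
  refine h2.trans ?_
  gcongr
  refine ((summable_qw hq0 hq1 w).sum_le_tsum _ fun _ _ => norm_nonneg _).trans (le_of_eq ?_)
  simp only [norm_neg, norm_mul, norm_pow, Complex.norm_real, Real.norm_eq_abs, abs_of_pos hq0]
  rw [tsum_mul_right, tsum_geometric_of_lt_one hq0.le hq1]

lemma qp_tendsto_one (hq0 : 0 < q) (hq1 : q < 1) (w : ℂ) :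
    Tendsto (fun k : ℕ => qp q ((q : ℂ) ^ k * w)) atTop (𝓝 1) := by
  rw [tendsto_iff_norm_sub_tendsto_zero]
  refine squeeze_zero (fun _ => norm_nonneg _) (fun k => norm_qp_sub_one_le hq0 hq1 _) ?_
  have h : Tendsto (fun k : ℕ => (q : ℂ) ^ k * w) atTop (𝓝 (0 * w)) :=
    (tendsto_pow_atTop_nhds_zero_of_norm_lt_one (by
      rwa [Complex.norm_real, Real.norm_eq_abs, abs_of_pos hq0])).mul_const w
  have h2 := (Real.continuous_exp.tendsto _).comp (h.norm.const_mul ((1 - q)⁻¹))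
  simpa using h2.sub_const 1

end Pochhammer

/-! ### The lattice and the summand -/

section Summand

variable {q : ℝ} {n : ℕ}

/-- The element of the root lattice `{λ ∈ ℤⁿ⁺¹ : ∑ λᵢ = 0}` with first coordinates `ν`. -/
def lam (ν : Fin n → ℤ) : Fin (n + 1) → ℤ := Fin.snoc ν (-∑ i, ν i)

/-- The lattice point `(X₁ q^{λ₁}, …, X_{n+1} q^{λ_{n+1}})` attached to `λ = lam ν`. -/
noncomputable def zz (q : ℂ) (X : Fin (n + 1) → ℂ) (ν : Fin n → ℤ) : Fin (n + 1) → ℂ :=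
  fun i => X i * q ^ lam ν i

/-- `∏_j (q a_j u)_∞ (q b_j / u)_∞`; in contrast to the statement, the parameters are the
inverses of the `a_j`, `b_j`, so that the limit of infinite parameters is the value `0`. -/
noncomputable def hh (q : ℂ) (a b : Fin (n + 1) → ℂ) (u : ℂ) : ℂ :=
  ∏ j, qp q (q * a j * u) * qp q (q * b j * u⁻¹)

/-- The denominator `∏_{i<j} (q z_i/z_j)_∞ (q z_j/z_i)_∞`. -/
noncomputable def dn (q : ℂ) (z : Fin (n + 1) → ℂ) : ℂ :=
  ∏ i, ∏ j ∈ Finset.Ioi i, qp q (q * z i / z j) * qp q (q * z j / z i)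

/-- The summand of the regularized Jackson integral (with inverted parameters). -/
noncomputable def ff (q : ℂ) (a b z : Fin (n + 1) → ℂ) : ℂ := (∏ i, hh q a b (z i)) / dn q z

/-- The regularized Jackson sum over the lattice through `X` (with inverted parameters). -/
noncomputable def FF (q : ℂ) (a b X : Fin (n + 1) → ℂ) : ℂ :=
  ∑' ν : Fin n → ℤ, ff q a b (zz q X ν)

/-- The antisymmetric theta-type function `(y - x) (q x/y)_∞ (q y/x)_∞`. -/
noncomputable def ee (q x y : ℂ) : ℂ := (y - x) * (qp q (q * x / y) * qp q (q * y / x))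

/-- The product `∏_{i<j} ee(z_i, z_j)`: the Vandermonde determinant times `dn`. -/
noncomputable def eP (q : ℂ) (z : Fin (n + 1) → ℂ) : ℂ :=
  ∏ i, ∏ j ∈ Finset.Ioi i, ee q (z i) (z j)

/-- The quasi-periodic part of the summand: `ff` without the Vandermonde determinant. -/
noncomputable def Phi (q : ℂ) (a b z : Fin (n + 1) → ℂ) : ℂ := (∏ i, hh q a b (z i)) / eP q z

lemma ee_symm (q x y : ℂ) : ee q x y = -ee q y x := by
  unfold ee; ring

lemma ee_left (hq0 : 0 < q) (hq1 : q < 1) {x y : ℂ} (hx : x ≠ 0) (hy : y ≠ 0) :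
    ee q (q * x) y = -(y / x) * ee q x y := by
  have hq : (q : ℂ) ≠ 0 := by exact_mod_cast hq0.ne'
  unfold ee
  rw [show (q : ℂ) * y / (q * x) = y / x by field_simp,
    qp_step hq0 hq1 (y / x), qp_step hq0 hq1 (q * x / y),
    show (q : ℂ) * (y / x) = q * y / x by ring,
    show (q : ℂ) * (q * x) / y = q * (q * x / y) by ring]
  field_simp
  ring

lemma ee_right (hq0 : 0 < q) (hq1 : q < 1) {x y : ℂ} (hx : x ≠ 0) (hy : y ≠ 0) :
    ee q x (q * y) = -(x / y) * ee q x y := by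
  rw [ee_symm, ee_left hq0 hq1 hy hx, ee_symm (q : ℂ) x y]; ring

lemma eP_eq (q : ℂ) (z : Fin (n + 1) → ℂ) : eP q z = (Matrix.vandermonde z).det * dn q z := by
  simp only [eP, dn, ee, Matrix.det_vandermonde, Finset.prod_mul_distrib]

lemma ff_eq (q : ℂ) (a b z : Fin (n + 1) → ℂ) (hz : Function.Injective z) :
    ff q a b z = Phi q a b z * (Matrix.vandermonde z).det := by
  have h : (Matrix.vandermonde z).det ≠ 0 := Matrix.det_vandermonde_ne_zero_iff.2 hz
  rw [ff, Phi, eP_eq, div_mul_eq_mul_div, mul_comm (Matrix.vandermonde z).det,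
    mul_div_mul_right _ _ h]

/-- Quasi-periodicity of `eP` under `z_k ↦ q z_k`: each of the other variables contributes the
factor `-z_j / z_k`, whether `j < k` or `k < j`. -/
lemma eP_update (hq0 : 0 < q) (hq1 : q < 1) (z : Fin (n + 1) → ℂ) (hz : ∀ i, z i ≠ 0)
    (k : Fin (n + 1)) :
    eP q (Function.update z k (q * z k)) * z k ^ (n + 1) = (-1) ^ n * (∏ i, z i) * eP q z := by
  set g : Fin (n + 1) → ℂ := fun j => -(z j / z k) with hg
  have h1 : ∀ i, ∀ j ∈ Finset.Ioi i,
      ee q (Function.update z k (q * z k) i) (Function.update z k (q * z k) j) =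
        ((if i = k then g j else 1) * (if j = k then g i else 1)) * ee q (z i) (z j) := by
    intro i j hij
    have hij : i < j := by simpa using hij
    by_cases hi : i = k
    · subst hi
      have hj : j ≠ i := hij.ne'
      simp [hj, ee_left hq0 hq1 (hz i) (hz j), hg]
    · by_cases hj : j = k
      · subst hj
        simp [hi, ee_right hq0 hq1 (hz i) (hz j), hg]
      · simp [hi, hj]
  have h2 : ∏ i, ∏ j ∈ Finset.Ioi i, ((if i = k then g j else 1) * (if j = k then g i else 1)) =
      ∏ j ∈ {k}ᶜ, g j := by
    simp only [Finset.prod_mul_distrib]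
    rw [← Finset.Ioi_disjUnion_Iio, Finset.prod_disjUnion]
    congr 1
    · rw [Finset.prod_eq_single k]
      · simp
      · intro i _ hi; simp [hi]
      · simp
    · simp only [Finset.prod_ite_eq', Finset.mem_Ioi]
      rw [Finset.prod_ite, Finset.prod_const_one, mul_one]
      congr 1
      ext i; simp
  have h3 : eP q (Function.update z k (q * z k)) = (∏ j ∈ {k}ᶜ, g j) * eP q z := by
    unfold eP
    rw [← h2, ← Finset.prod_mul_distrib]
    refine Finset.prod_congr rfl fun i _ => ?_
    rw [← Finset.prod_mul_distrib]
    exact Finset.prod_congr rfl (h1 i)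
  have h4 : (∏ j ∈ {k}ᶜ, g j) * z k ^ (n + 1) = (-1) ^ n * ∏ i, z i := by
    rw [← Finset.prod_mul_prod_compl {k} z, Finset.prod_singleton]
    have : ∀ j ∈ ({k}ᶜ : Finset (Fin (n + 1))), g j = (-(z k)⁻¹) * z j := by
      intro j _; simp only [hg]; ring
    rw [Finset.prod_congr rfl this, Finset.prod_mul_distrib, Finset.prod_const,
      Finset.card_compl, Finset.card_singleton, Fintype.card_fin, Nat.add_sub_cancel, neg_pow,
      inv_pow, pow_succ (z k)]
    have hk := hz k
    field_simp
  rw [h3, mul_right_comm, h4]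

lemma lam_sum (ν : Fin n → ℤ) : ∑ i, lam ν i = 0 := by
  simp [lam, Fin.sum_univ_castSucc]

lemma lam_add (ν μ : Fin n → ℤ) : lam (ν + μ) = lam ν + lam μ := by
  ext i
  refine Fin.lastCases ?_ (fun i => ?_) i
  · simp [lam, Finset.sum_add_distrib]; ring
  · simp [lam]

/-- A vector of coordinate sum zero is determined by its first coordinates. -/
lemma lam_castSucc (l : Fin (n + 1) → ℤ) (hl : ∑ i, l i = 0) : lam (fun i => l i.castSucc) = l := by
  ext i
  refine Fin.lastCases ?_ (fun i => ?_) i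
  · rw [Fin.sum_univ_castSucc] at hl
    simp [lam]; linarith
  · simp [lam]

/-- The shift of `ν` corresponding to the root `e_i - e_j`. -/
def rt (i j : Fin (n + 1)) : Fin n → ℤ :=
  fun k => (Pi.single i (1 : ℤ) - Pi.single j 1 : Fin (n + 1) → ℤ) k.castSucc

lemma lam_rt (i j : Fin (n + 1)) : lam (rt i j) = Pi.single i 1 - Pi.single j 1 := by
  apply lam_castSucc
  simp [Finset.sum_sub_distrib]

lemma zz_ne_zero (hq0 : 0 < q) {X : Fin (n + 1) → ℂ} (hX : ∀ i, X i ≠ 0) (ν : Fin n → ℤ)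
    (i : Fin (n + 1)) : zz q X ν i ≠ 0 :=
  mul_ne_zero (hX i) (zpow_ne_zero _ (by exact_mod_cast hq0.ne'))

lemma zz_prod (hq0 : 0 < q) (X : Fin (n + 1) → ℂ) (ν : Fin n → ℤ) :
    ∏ i, zz q X ν i = ∏ i, X i := by
  have hq : (q : ℂ) ≠ 0 := by exact_mod_cast hq0.ne'
  have h : ∏ i, (q : ℂ) ^ lam ν i = 1 := by
    have : ∀ s : Finset (Fin (n + 1)), ∏ i ∈ s, (q : ℂ) ^ lam ν i = (q : ℂ) ^ ∑ i ∈ s, lam ν i := by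
      intro s
      induction s using Finset.induction_on with
      | empty => simp
      | insert i s hi ih => rw [Finset.prod_insert hi, Finset.sum_insert hi, zpow_add₀ hq, ih]
    rw [this, lam_sum, zpow_zero]
  simp only [zz, Finset.prod_mul_distrib, h, mul_one]

lemma zz_inj (hq0 : 0 < q) {X : Fin (n + 1) → ℂ} (hX : ∀ i, X i ≠ 0)
    (hXX : ∀ i j, i ≠ j → ∀ m : ℤ, X i / X j ≠ (q : ℂ) ^ m) (ν : Fin n → ℤ) :
    Function.Injective (zz q X ν) := by
  have hq : (q : ℂ) ≠ 0 := by exact_mod_cast hq0.ne'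
  intro i j hij
  by_contra hne
  refine hXX i j hne (lam ν j - lam ν i) ?_
  rw [zpow_sub₀ hq, div_eq_div_iff (hX j) (zpow_ne_zero _ hq)]
  simp only [zz] at hij
  rw [hij]; ring

lemma zz_rt_left (hq0 : 0 < q) (X : Fin (n + 1) → ℂ) (ν : Fin n → ℤ) {i j : Fin (n + 1)}
    (hij : i ≠ j) : zz q X (ν + rt i j) i = q * zz q X ν i := by
  have hq : (q : ℂ) ≠ 0 := by exact_mod_cast hq0.ne'
  simp [zz, lam_add, lam_rt, hij, zpow_add₀ hq]; ring

lemma zz_rt_right (hq0 : 0 < q) (X : Fin (n + 1) → ℂ) (ν : Fin n → ℤ) {i j : Fin (n + 1)}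
    (hij : i ≠ j) : zz q X ν j = q * zz q X (ν + rt i j) j := by
  have hq : (q : ℂ) ≠ 0 := by exact_mod_cast hq0.ne'
  simp only [zz, lam_add, lam_rt, Pi.add_apply, Pi.sub_apply, Pi.single_eq_same,
    Pi.single_eq_of_ne hij.symm, zero_sub]
  rw [zpow_add₀ hq, zpow_neg_one]
  field_simp

lemma zz_rt_other (X : Fin (n + 1) → ℂ) (ν : Fin n → ℤ) {i j k : Fin (n + 1)}
    (hi : k ≠ i) (hj : k ≠ j) : zz (q : ℂ) X (ν + rt i j) k = zz q X ν k := by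
  simp [zz, lam_add, lam_rt, hi, hj]

lemma eP_rt (hq0 : 0 < q) (hq1 : q < 1) {X : Fin (n + 1) → ℂ} (hX : ∀ i, X i ≠ 0)
    (ν : Fin n → ℤ) {i j : Fin (n + 1)} (hij : i ≠ j) :
    eP q (zz q X (ν + rt i j)) * zz q X ν i ^ (n + 1) =
      eP q (zz q X ν) * zz q X (ν + rt i j) j ^ (n + 1) := by
  have h1 := eP_update hq0 hq1 (zz q X ν) (zz_ne_zero hq0 hX ν) i
  have h2 := eP_update hq0 hq1 (zz q X (ν + rt i j)) (zz_ne_zero hq0 hX _) j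
  rw [zz_prod hq0] at h1 h2
  have h3 : Function.update (zz q X ν) i (q * zz q X ν i) =
      Function.update (zz q X (ν + rt i j)) j (q * zz q X (ν + rt i j) j) := by
    ext k
    by_cases hk : k = i
    · subst hk
      rw [Function.update_self, Function.update_of_ne hij, zz_rt_left hq0 X ν hij]
    · by_cases hk' : k = j
      · subst hk'
        rw [Function.update_self, Function.update_of_ne hk, zz_rt_right hq0 X ν hij]
      · rw [Function.update_of_ne hk, Function.update_of_ne hk', zz_rt_other X ν hk hk']
  rw [h3] at h1
  have hP : (-1 : ℂ) ^ n * ∏ i, X i ≠ 0 :=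
    mul_ne_zero (pow_ne_zero _ (by norm_num)) (Finset.prod_ne_zero_iff.2 fun i _ => hX i)
  apply mul_left_cancel₀ hP
  linear_combination (zz q X (ν + rt i j) j ^ (n + 1)) * h1 - (zz q X ν i ^ (n + 1)) * h2

lemma hh_step (hq0 : 0 < q) (hq1 : q < 1) (a b : Fin (n + 1) → ℂ) {u : ℂ} (hu : u ≠ 0) :
    hh q a b (q * u) * (∏ j, (1 + -a j * (q * u))) * u ^ (n + 1) =
      hh q a b u * ∏ j, (-b j + 1 * u) := by
  have hq : (q : ℂ) ≠ 0 := by exact_mod_cast hq0.ne'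
  have hc : u ^ (n + 1) = ∏ _j : Fin (n + 1), u := by simp
  rw [hc]
  unfold hh
  rw [← Finset.prod_mul_distrib, ← Finset.prod_mul_distrib, ← Finset.prod_mul_distrib]
  refine Finset.prod_congr rfl fun j _ => ?_
  rw [qp_step hq0 hq1 (q * a j * u), show (q : ℂ) * b j * (q * u)⁻¹ = b j * u⁻¹ by field_simp,
    qp_step hq0 hq1 (b j * u⁻¹)]
  rw [show (q : ℂ) * (q * a j * u) = q * a j * (q * u) by ring,
    show (q : ℂ) * (b j * u⁻¹) = q * b j * u⁻¹ by ring]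
  field_simp
  ring

/-- The basic relation: up to the polynomials `∏ (1 - a_k u)` and `∏ (u - b_k)`, the function
`Phi` is invariant under the shift `z_i ↦ q z_i`, `z_j ↦ z_j / q`. -/
lemma Phi_rt (hq0 : 0 < q) (hq1 : q < 1) (a b : Fin (n + 1) → ℂ) {X : Fin (n + 1) → ℂ}
    (hX : ∀ i, X i ≠ 0) (ν : Fin n → ℤ) {i j : Fin (n + 1)} (hij : i ≠ j) :
    Phi q a b (zz q X (ν + rt i j)) * (∏ k, (1 + -a k * zz q X (ν + rt i j) i)) *
        (∏ k, (-b k + 1 * zz q X (ν + rt i j) j)) =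
      Phi q a b (zz q X ν) * (∏ k, (-b k + 1 * zz q X ν i)) *
        (∏ k, (1 + -a k * zz q X ν j)) := by
  set z := zz q X ν
  set z' := zz q X (ν + rt i j)
  have hz : ∀ k, z k ≠ 0 := zz_ne_zero hq0 hX ν
  have hz' : ∀ k, z' k ≠ 0 := zz_ne_zero hq0 hX _
  have e1 := eP_rt hq0 hq1 hX ν hij
  have s1 := hh_step hq0 hq1 a b (hz i)
  have s2 := hh_step hq0 hq1 a b (hz' j)
  have hi : z' i = q * z i := zz_rt_left hq0 X ν hij
  have hj : z j = q * z' j := zz_rt_right hq0 X ν hij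
  rw [← hi] at s1
  rw [← hj] at s2
  have split : ∀ g : Fin (n + 1) → ℂ, ∏ k, g k = g i * g j * ∏ k ∈ (univ.erase i).erase j, g k := by
    intro g
    rw [mul_assoc, Finset.mul_prod_erase _ _ (by simp [hij.symm]), Finset.mul_prod_erase _ _ (by simp)]
  have ho : ∏ k ∈ (univ.erase i).erase j, hh q a b (z' k) =
      ∏ k ∈ (univ.erase i).erase j, hh q a b (z k) := by
    refine Finset.prod_congr rfl fun k hk => ?_
    simp only [Finset.mem_erase, Finset.mem_univ, and_true] at hk
    rw [show z' k = z k from zz_rt_other X ν hk.2 hk.1]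
  change eP q z' * z i ^ (n + 1) = eP q z * z' j ^ (n + 1) at e1
  unfold Phi
  rw [split fun k => hh q a b (z' k), split fun k => hh q a b (z k), ho]
  have hzi := pow_ne_zero (n + 1) (hz i)
  have hzj := pow_ne_zero (n + 1) (hz' j)
  by_cases he : eP q z = 0
  · have he' : eP q z' = 0 := by
      rw [he, zero_mul] at e1
      exact (mul_eq_zero.1 e1).resolve_right hzi
    simp [he, he']
  · have he' : eP q z' ≠ 0 := by
      intro h
      rw [h, zero_mul] at e1
      exact mul_ne_zero he hzj e1.symm
    rw [div_mul_eq_mul_div, div_mul_eq_mul_div, div_mul_eq_mul_div, div_mul_eq_mul_div,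
      div_eq_div_iff he' he]
    apply mul_right_cancel₀ (mul_ne_zero hzi hzj)
    set R := ∏ k ∈ (univ.erase i).erase j, hh q a b (z k)
    set A1 := ∏ k, (1 + -a k * z' i)
    set B1 := ∏ k, (-b k + 1 * z' j)
    set A2 := ∏ k, (1 + -a k * z j)
    set B2 := ∏ k, (-b k + 1 * z i)
    linear_combination (hh q a b (z' j) * R * B1 * eP q z * z' j ^ (n + 1)) * s1
      - (hh q a b (z i) * R * B2 * eP q z * z' j ^ (n + 1)) * s2
      - (hh q a b (z i) * hh q a b (z j) * R * B2 * A2 * z' j ^ (n + 1)) * e1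

end Summand

/-! ### Summability -/

section Summability

open Filter Topology

variable {q : ℝ} {n : ℕ}

/-- The Gaussian factor compensating the quasi-periodicity of `eP`; the power `c^l` drops out of
products over the root lattice and serves to balance the two ends of the sum over `l`. -/
noncomputable def gau {K : Type*} [Field K] (q c t : K) (N : ℕ) (l : ℤ) : K :=
  (c * t ^ N) ^ l * q ^ ((N : ℤ) * (l * (l - 1) / 2))

lemma gau_succ {K : Type*} [Field K] {q c t : K} (hq : q ≠ 0) (hc : c ≠ 0) (ht : t ≠ 0)
    (N : ℕ) (l : ℤ) : gau q c t N (l + 1) = gau q c t N l * (c * (t * q ^ l) ^ N) := by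
  have h : (l + 1) * (l + 1 - 1) / 2 = l * (l - 1) / 2 + l := by
    rw [show (l + 1) * (l + 1 - 1) = l * (l - 1) + l * 2 by ring,
      Int.add_mul_ediv_right _ _ (by norm_num)]
  rw [gau, gau, h, zpow_add_one₀ (mul_ne_zero hc (pow_ne_zero _ ht)), mul_add, zpow_add₀ hq,
    mul_pow, mul_comm (N : ℤ) l, zpow_mul q l (N : ℤ), zpow_natCast]
  ring

lemma norm_gau (hq0 : 0 < q) {c : ℝ} (hc : 0 < c) (X : ℂ) (N : ℕ) (l : ℤ) :
    ‖gau (q : ℂ) (c : ℂ) X N l‖ = gau q c ‖X‖ N l := by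
  simp [gau, abs_of_pos hq0, abs_of_pos hc]

lemma gau_pos (hq0 : 0 < q) {c t : ℝ} (hc : 0 < c) (ht : 0 < t) (N : ℕ) (l : ℤ) :
    0 < gau q c t N l := by
  unfold gau; positivity

/-- A function on `ℤⁿ` invariant under the unit shifts is constant. -/
lemma const_of_periodic {α : Type*} (G : (Fin n → ℤ) → α)
    (h : ∀ i ν, G (ν + Pi.single i 1) = G ν) (ν : Fin n → ℤ) : G ν = G 0 := by
  let S : AddSubgroup (Fin n → ℤ) :=
    { carrier := {p | ∀ μ, G (μ + p) = G μ}
      add_mem' := by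
        intro p r hp hr μ
        rw [← add_assoc, hr, hp]
      zero_mem' := by intro μ; rw [add_zero]
      neg_mem' := by
        intro p hp μ
        rw [← hp (μ + -p), neg_add_cancel_right] }
  have h1 : ν ∈ S := by
    rw [← Finset.univ_sum_single ν]
    refine S.sum_mem fun i _ => ?_
    have : (Pi.single i (ν i) : Fin n → ℤ) = ν i • Pi.single i 1 := by
      rw [← Pi.single_smul]; simp
    rw [this]
    exact S.zsmul_mem (h i) _
  simpa using h1 0

lemma rt_last (i : Fin n) : rt i.castSucc (Fin.last n) = Pi.single i 1 := by
  ext k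
  simp [rt, Pi.single_apply, Fin.ext_iff, k.isLt.ne]

/-- By quasi-periodicity, `eP` on the lattice is a constant divided by Gaussian factors, so `1 / eP`
is a product of functions of one variable each. -/
lemma eP_closed (hq0 : 0 < q) (hq1 : q < 1) {c : ℂ} (hc : c ≠ 0) {X : Fin (n + 1) → ℂ}
    (hX : ∀ i, X i ≠ 0) (ν : Fin n → ℤ) :
    eP q (zz q X ν) * ∏ i, gau (q : ℂ) c (X i) (n + 1) (lam ν i) =
      eP q (zz q X 0) * ∏ i, gau (q : ℂ) c (X i) (n + 1) (lam (0 : Fin n → ℤ) i) := by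
  have hq : (q : ℂ) ≠ 0 := by exact_mod_cast hq0.ne'
  refine const_of_periodic
    (fun ν => eP q (zz q X ν) * ∏ i, gau (q : ℂ) c (X i) (n + 1) (lam ν i)) (fun i ν => ?_) ν
  rw [← rt_last]
  have hij : i.castSucc ≠ Fin.last n := (Fin.castSucc_lt_last i).ne
  have e1 := eP_rt hq0 hq1 hX ν hij
  set j := Fin.last n
  set i' := i.castSucc
  have split : ∀ g : Fin (n + 1) → ℂ,
      ∏ k, g k = g i' * g j * ∏ k ∈ (univ.erase i').erase j, g k := by
    intro g
    rw [mul_assoc, Finset.mul_prod_erase _ _ (by simp [hij.symm]),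
      Finset.mul_prod_erase _ _ (by simp)]
  have ho : ∏ k ∈ (univ.erase i').erase j, gau (q : ℂ) c (X k) (n + 1) (lam (ν + rt i' j) k) =
      ∏ k ∈ (univ.erase i').erase j, gau (q : ℂ) c (X k) (n + 1) (lam ν k) := by
    refine Finset.prod_congr rfl fun k hk => ?_
    simp only [Finset.mem_erase, Finset.mem_univ, and_true] at hk
    simp [lam_add, lam_rt, hk.1, hk.2]
  have hi : lam (ν + rt i' j) i' = lam ν i' + 1 := by simp [lam_add, lam_rt, hij]
  have hj : lam ν j = lam (ν + rt i' j) j + 1 := by simp [lam_add, lam_rt, hij.symm]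
  have g1 := gau_succ hq hc (hX i') (n + 1) (lam ν i')
  have g2 := gau_succ hq hc (hX j) (n + 1) (lam (ν + rt i' j) j)
  rw [← hi] at g1
  rw [← hj] at g2
  change _ = _ * (c * zz q X ν i' ^ (n + 1)) at g1
  change _ = _ * (c * zz q X (ν + rt i' j) j ^ (n + 1)) at g2
  rw [split fun k => gau (q : ℂ) c (X k) (n + 1) (lam (ν + rt i' j) k),
    split fun k => gau (q : ℂ) c (X k) (n + 1) (lam ν k), ho, g1, g2]
  set R := ∏ k ∈ (univ.erase i').erase j, gau (q : ℂ) c (X k) (n + 1) (lam ν k)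
  linear_combination (gau (q : ℂ) c (X i') (n + 1) (lam ν i') *
    gau (q : ℂ) c (X j) (n + 1) (lam (ν + rt i' j) j) * c * R) * e1

/-- Real majorant of `hh`. -/
noncomputable def hA (q : ℝ) (a b : Fin (n + 1) → ℝ) (s : ℝ) : ℝ :=
  ∏ j, mq q (q * a j * s) * mq q (q * b j * s⁻¹)

lemma hA_pos (hq0 : 0 < q) (hq1 : q < 1) {a b : Fin (n + 1) → ℝ} (ha : ∀ i, 0 ≤ a i)
    (hb : ∀ i, 0 ≤ b i) {s : ℝ} (hs : 0 < s) : 0 < hA q a b s := by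
  refine Finset.prod_pos fun j _ => mul_pos (mq_pos hq0 hq1 ?_) (mq_pos hq0 hq1 ?_)
  · have := ha j; positivity
  · have := hb j; positivity

lemma norm_hh_le (hq0 : 0 < q) (hq1 : q < 1) {a b : Fin (n + 1) → ℂ} {a' b' : Fin (n + 1) → ℝ}
    (ha : ∀ i, ‖a i‖ ≤ a' i) (hb : ∀ i, ‖b i‖ ≤ b' i) (u : ℂ) :
    ‖hh q a b u‖ ≤ hA q a' b' ‖u‖ := by
  unfold hh hA
  rw [norm_prod]
  refine Finset.prod_le_prod (fun _ _ => norm_nonneg _) fun j _ => ?_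
  rw [norm_mul]
  have h1 : ‖qp q (q * a j * u)‖ ≤ mq q (q * a' j * ‖u‖) := by
    apply norm_qp_le hq0 hq1
    rw [norm_mul, norm_mul, Complex.norm_real, Real.norm_eq_abs, abs_of_pos hq0]
    have := ha j
    gcongr
  have h2 : ‖qp q (q * b j * u⁻¹)‖ ≤ mq q (q * b' j * ‖u‖⁻¹) := by
    apply norm_qp_le hq0 hq1
    rw [norm_mul, norm_mul, Complex.norm_real, Real.norm_eq_abs, abs_of_pos hq0, norm_inv]
    have := hb j
    gcongr
  exact mul_le_mul h1 h2 (norm_nonneg _) ((norm_nonneg _).trans h1)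

lemma hA_step (hq0 : 0 < q) (hq1 : q < 1) {a b : Fin (n + 1) → ℝ} (ha : ∀ i, 0 ≤ a i)
    {s : ℝ} (hs : 0 < s) :
    hA q a b (q * s) * s ^ (n + 1) = hA q a b s * ∏ j, ((s + b j) / (1 + q * a j * s)) := by
  have hc : s ^ (n + 1) = ∏ _j : Fin (n + 1), s := by simp
  rw [hc]
  unfold hA
  rw [← Finset.prod_mul_distrib, ← Finset.prod_mul_distrib]
  refine Finset.prod_congr rfl fun j _ => ?_
  rw [mq_step hq0 hq1 (q * a j * s), show q * b j * (q * s)⁻¹ = b j * s⁻¹ by field_simp,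
    mq_step hq0 hq1 (b j * s⁻¹)]
  rw [show q * (q * a j * s) = q * a j * (q * s) by ring,
    show q * (b j * s⁻¹) = q * b j * s⁻¹ by ring]
  have : 1 + q * a j * s ≠ 0 := by have := ha j; positivity
  field_simp

/-- One-variable factor of the majorant of the sum. -/
noncomputable def uu (q c : ℝ) (M : ℕ) (a b : Fin (n + 1) → ℝ) (t : ℝ) (l : ℤ) : ℝ :=
  hA q a b (t * q ^ l) * (1 + t * q ^ l) ^ M * gau q c t (n + 1) l

lemma uu_pos (hq0 : 0 < q) (hq1 : q < 1) {c : ℝ} (hc : 0 < c) (M : ℕ) {a b : Fin (n + 1) → ℝ}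
    (ha : ∀ i, 0 ≤ a i) (hb : ∀ i, 0 ≤ b i) {t : ℝ} (ht : 0 < t) (l : ℤ) :
    0 < uu q c M a b t l := by
  have h1 : 0 < t * q ^ l := by positivity
  exact mul_pos (mul_pos (hA_pos hq0 hq1 ha hb h1) (by positivity)) (gau_pos hq0 hc ht _ _)

lemma uu_step (hq0 : 0 < q) (hq1 : q < 1) {c : ℝ} (hc : 0 < c) (M : ℕ) {a b : Fin (n + 1) → ℝ}
    (ha : ∀ i, 0 ≤ a i) {t : ℝ} (ht : 0 < t) (l : ℤ) :
    uu q c M a b t (l + 1) = uu q c M a b t l *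
      (c * (∏ j, ((t * q ^ l + b j) / (1 + q * a j * (t * q ^ l)))) *
        ((1 + q * (t * q ^ l)) / (1 + t * q ^ l)) ^ M) := by
  have h1 : 0 < t * q ^ l := by positivity
  have h2 := hA_step hq0 hq1 (b := b) ha h1
  have h3 : t * q ^ (l + 1) = q * (t * q ^ l) := by rw [zpow_add_one₀ hq0.ne']; ring
  rw [uu, uu, h3, gau_succ hq0.ne' hc.ne' ht.ne', div_pow]
  have h4 : (1 + t * q ^ l) ^ M ≠ 0 := by positivity
  generalize t * q ^ l = s at h1 h2 h4 ⊢
  generalize (∏ j, ((s + b j) / (1 + q * a j * s))) = P at h2 ⊢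
  field_simp
  linear_combination (gau q c t (n + 1) l) * h2

/-- Ratio test at both ends: the ratio of consecutive terms tends to `c ∏ b_j` as `l → ∞`, and to
`c⁻¹ q^{n+1-M} ∏ a_j` as `l → -∞`. -/
lemma summable_uu (hq0 : 0 < q) (hq1 : q < 1) {c : ℝ} (hc : 0 < c) (M : ℕ)
    {a b : Fin (n + 1) → ℝ} (ha : ∀ i, 0 ≤ a i) (hb : ∀ i, 0 ≤ b i) {t : ℝ} (ht : 0 < t)
    (h1 : c * ∏ j, b j < 1) (h2 : q ^ (n + 1) * ∏ j, a j < c * q ^ M) :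
    Summable (uu q c M a b t) := by
  have hpow : Tendsto (fun k : ℕ => q ^ k) atTop (𝓝 0) :=
    tendsto_pow_atTop_nhds_zero_of_lt_one hq0.le hq1
  have pos := uu_pos hq0 hq1 hc M ha hb ht
  apply Summable.of_nat_of_neg
  · refine summable_of_ratio_test_tendsto_lt_one h1 (Eventually.of_forall fun k => (pos _).ne') ?_
    have hr : ContinuousAt (fun s : ℝ => c * (∏ j, ((s + b j) / (1 + q * a j * s))) *
        ((1 + q * s) / (1 + s)) ^ M) 0 := by
      have : ∀ j, (1 + q * a j * (0 : ℝ)) ≠ 0 := by simp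
      have : (1 + (0 : ℝ)) ≠ 0 := by simp
      refine ContinuousAt.mul (ContinuousAt.mul continuousAt_const ?_) ?_
      · refine tendsto_finsetProd _ fun j _ => ?_
        exact ContinuousAt.div (by fun_prop) (by fun_prop) (by simp)
      · exact ContinuousAt.pow (ContinuousAt.div (by fun_prop) (by fun_prop) (by simp)) _
    have hs : Tendsto (fun k : ℕ => t * q ^ (k : ℤ)) atTop (𝓝 0) := by
      simpa using hpow.const_mul t
    have := hr.tendsto.comp hs
    simp only [mul_zero, add_zero, zero_add, div_one, one_pow, mul_one] at this
    refine this.congr fun k => ?_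
    rw [Real.norm_of_nonneg (pos _).le, Real.norm_of_nonneg (pos _).le]
    push_cast
    rw [uu_step hq0 hq1 hc M ha ht, mul_div_cancel_left₀ _ (pos _).ne']
    rfl
  · have h2' : c⁻¹ * (q ^ (n + 1) * ∏ j, a j) * (q⁻¹) ^ M < 1 := by
      rw [inv_pow, ← div_eq_mul_inv, div_lt_one (by positivity), inv_mul_lt_iff₀ hc]
      exact h2
    refine summable_of_ratio_test_tendsto_lt_one h2'
      (Eventually.of_forall fun k => (pos _).ne') ?_
    have hr : ContinuousAt (fun s : ℝ => c⁻¹ * (∏ j, ((s + q * a j) / (1 + b j * s))) *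
        ((s + 1) / (s + q)) ^ M) 0 := by
      refine ContinuousAt.mul (ContinuousAt.mul continuousAt_const ?_) ?_
      · refine tendsto_finsetProd _ fun j _ => ?_
        exact ContinuousAt.div (by fun_prop) (by fun_prop) (by simp)
      · exact ContinuousAt.pow (ContinuousAt.div (by fun_prop) (by fun_prop)
          (by simpa using hq0.ne')) _
    have hs : Tendsto (fun k : ℕ => t⁻¹ * q ^ (k + 1)) atTop (𝓝 0) := by
      simpa using ((tendsto_add_atTop_iff_nat 1).2 hpow).const_mul t⁻¹
    have := hr.tendsto.comp hs
    simp only [mul_zero, add_zero, zero_add, div_one, one_div, Finset.prod_mul_distrib,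
      Finset.prod_const, Finset.card_univ, Fintype.card_fin] at this
    refine this.congr fun k => ?_
    rw [Real.norm_of_nonneg (pos _).le, Real.norm_of_nonneg (pos _).le]
    -- the ratio at `-(k+1)` is the inverse of the forward ratio at `s = t q^{-(k+1)}`
    have e1 := uu_step hq0 hq1 hc M (b := b) ha ht (-((k + 1 : ℕ) : ℤ))
    rw [show -((k + 1 : ℕ) : ℤ) + 1 = -(k : ℤ) by push_cast; ring] at e1
    rw [e1, div_mul_cancel_left₀ (pos _).ne']
    have hz : t * q ^ (-((k + 1 : ℕ) : ℤ)) = (t⁻¹ * q ^ (k + 1))⁻¹ := by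
      rw [zpow_neg, zpow_natCast, mul_inv, inv_inv]
    rw [hz]
    simp only [Function.comp]
    have hσ : 0 < t⁻¹ * q ^ (k + 1) := by positivity
    set σ := t⁻¹ * q ^ (k + 1)
    rw [mul_inv, mul_inv, ← Finset.prod_inv_distrib, ← inv_pow, inv_div]
    congr 1
    · congr 1
      refine Finset.prod_congr rfl fun j _ => ?_
      have := ha j
      have := hb j
      rw [inv_div]
      have e3 : 1 + b j * σ ≠ 0 := by positivity
      have e4 : σ⁻¹ + b j ≠ 0 := by positivity
      rw [div_eq_div_iff e3 e4]
      field_simp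
    · congr 1
      have e3 : σ + q ≠ 0 := by positivity
      have e4 : 1 + q * σ⁻¹ ≠ 0 := by positivity
      rw [div_eq_div_iff e3 e4]
      field_simp

lemma summable_pi_prod : ∀ (n : ℕ) (g : Fin n → ℤ → ℝ), (∀ i l, 0 ≤ g i l) →
    (∀ i, Summable (g i)) → Summable fun ν : Fin n → ℤ => ∏ i, g i (ν i)
  | 0, _, _, _ => (hasSum_fintype _).summable
  | n + 1, g, h0, hs => by
    have ih := summable_pi_prod n (fun i => g i.succ) (fun i => h0 _) fun i => hs _
    have h := (hs 0).mul_of_nonneg ih (h0 0) fun ν => Finset.prod_nonneg fun i _ => h0 _ _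
    rw [← (Fin.consEquiv fun _ : Fin (n + 1) => ℤ).summable_iff]
    refine h.congr fun p => ?_
    simp [Fin.prod_univ_succ, Fin.consEquiv]

/-- The majorant of `Phi` on the lattice, with room for polynomials of degree `≤ M` in each
variable. -/
noncomputable def maj (q : ℝ) (M : ℕ) (a b : Fin (n + 1) → ℝ) (X : Fin (n + 1) → ℂ)
    (ν : Fin n → ℤ) : ℝ :=
  (∏ i, hA q a b ‖zz q X ν i‖) * (∏ i, (1 + ‖zz q X ν i‖) ^ M) * ‖eP q (zz q X ν)‖⁻¹

/-- Under the balancing condition a constant `c` can be chosen for which every one-variable factor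
is summable; the sum over the lattice is bounded by the product of the one-variable sums. -/
lemma summable_maj (hq0 : 0 < q) (hq1 : q < 1) (M : ℕ)
    {a b : Fin (n + 1) → ℝ} (ha : ∀ i, 0 ≤ a i) (hb : ∀ i, 0 ≤ b i)
    {X : Fin (n + 1) → ℂ} (hX : ∀ i, X i ≠ 0)
    (h : q ^ (n + 1) * (∏ j, a j) * (∏ j, b j) < q ^ M) :
    Summable (maj q M a b X) := by
  obtain ⟨c, hc, h1, h2⟩ : ∃ c : ℝ, 0 < c ∧ c * ∏ j, b j < 1 ∧
      q ^ (n + 1) * ∏ j, a j < c * q ^ M := by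
    have hA : 0 ≤ ∏ j, a j := Finset.prod_nonneg fun i _ => ha i
    rcases (Finset.prod_nonneg fun i (_ : i ∈ univ) => hb i).eq_or_lt with hB | hB
    · refine ⟨q ^ (n + 1) * (∏ j, a j) / q ^ M + 1, by positivity, by rw [← hB]; simp, ?_⟩
      rw [add_mul, div_mul_cancel₀ _ (by positivity)]
      have : 0 < q ^ M := by positivity
      linarith
    · have h3 : q ^ (n + 1) * (∏ j, a j) / q ^ M < 1 / ∏ j, b j := by
        rw [div_lt_div_iff₀ (by positivity) hB]; linarith
      obtain ⟨c, hc1, hc2⟩ := exists_between h3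
      refine ⟨c, lt_of_le_of_lt (by positivity) hc1, ?_, ?_⟩
      · rwa [lt_div_iff₀ hB] at hc2
      · rwa [div_lt_iff₀ (by positivity)] at hc1
  have hXp : ∀ i, 0 < ‖X i‖ := fun i => norm_pos_iff.2 (hX i)
  have pos := fun i l => uu_pos hq0 hq1 hc M ha hb (hXp i) l
  have sm := fun i => summable_uu hq0 hq1 hc M ha hb (hXp i) h1 h2
  have key : ∀ ν, maj q M a b X ν =
      ‖eP q (zz q X 0) * ∏ i, gau (q : ℂ) c (X i) (n + 1) (lam (0 : Fin n → ℤ) i)‖⁻¹ *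
        ∏ i, uu q c M a b ‖X i‖ (lam ν i) := by
    intro ν
    have hc' : (c : ℂ) ≠ 0 := by exact_mod_cast hc.ne'
    rw [← eP_closed hq0 hq1 hc' hX ν, norm_mul, norm_prod]
    simp only [norm_gau hq0 hc, maj, uu, Finset.prod_mul_distrib]
    have hz : ∀ i, ‖zz q X ν i‖ = ‖X i‖ * q ^ lam ν i := by
      intro i; simp [zz, abs_of_pos hq0]
    simp only [hz]
    have hg : ∏ i, gau q c ‖X i‖ (n + 1) (lam ν i) ≠ 0 :=
      Finset.prod_ne_zero_iff.2 fun i _ => (gau_pos hq0 hc (hXp i) _ _).ne'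
    field_simp
  refine Summable.congr (Summable.mul_left _ ?_) fun ν => (key ν).symm
  have hs := (summable_pi_prod n (fun i => uu q c M a b ‖X i.castSucc‖)
    (fun i l => (pos _ _).le) fun i => sm _).mul_right
      (∑' l, uu q c M a b ‖X (Fin.last n)‖ l)
  refine hs.of_nonneg_of_le (fun ν => Finset.prod_nonneg fun i _ => (pos _ _).le) fun ν => ?_
  rw [Fin.prod_univ_castSucc]
  have e1 : ∀ i : Fin n, lam ν i.castSucc = ν i := by intro i; simp [lam]
  simp only [e1]
  refine mul_le_mul_of_nonneg_left ?_ (Finset.prod_nonneg fun i _ => (pos _ _).le)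
  exact (sm _).le_tsum _ fun l _ => (pos _ _).le

lemma norm_Phi_mul_le (hq0 : 0 < q) (hq1 : q < 1) {a b : Fin (n + 1) → ℂ}
    {a' b' : Fin (n + 1) → ℝ} (ha : ∀ i, ‖a i‖ ≤ a' i) (hb : ∀ i, ‖b i‖ ≤ b' i)
    (M : ℕ) (X : Fin (n + 1) → ℂ) (ν : Fin n → ℤ) {y : ℂ} {C : ℝ}
    (hy : ‖y‖ ≤ C * ∏ i, (1 + ‖zz q X ν i‖) ^ M) :
    ‖Phi q a b (zz q X ν) * y‖ ≤ C * maj q M a' b' X ν := by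
  rw [norm_mul, Phi, norm_div, norm_prod, div_eq_mul_inv, maj]
  have h1 : ∏ i, ‖hh q a b (zz q X ν i)‖ ≤ ∏ i, hA q a' b' ‖zz q X ν i‖ :=
    Finset.prod_le_prod (fun _ _ => norm_nonneg _) fun i _ => norm_hh_le hq0 hq1 ha hb _
  have h0 : 0 ≤ ∏ i, hA q a' b' ‖zz q X ν i‖ :=
    (Finset.prod_nonneg fun _ _ => norm_nonneg _).trans h1
  calc _ ≤ (∏ i, hA q a' b' ‖zz q X ν i‖) * ‖eP q (zz q X ν)‖⁻¹ *
        (C * ∏ i, (1 + ‖zz q X ν i‖) ^ M) := by gcongr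
    _ = _ := by ring

lemma norm_vandermonde_le (z : Fin (n + 1) → ℂ) :
    ‖(Matrix.vandermonde z).det‖ ≤ ∏ i, (1 + ‖z i‖) ^ n := by
  rw [Matrix.det_vandermonde, norm_prod]
  have h1 : ∀ i, ‖∏ j ∈ Finset.Ioi i, (z j - z i)‖ ≤
      ∏ j ∈ Finset.Ioi i, ((1 + ‖z j‖) * (1 + ‖z i‖)) := by
    intro i
    rw [norm_prod]
    refine Finset.prod_le_prod (fun _ _ => norm_nonneg _) fun j _ => ?_
    refine (norm_sub_le _ _).trans ?_
    nlinarith [norm_nonneg (z i), norm_nonneg (z j), mul_nonneg (norm_nonneg (z i)) (norm_nonneg (z j))]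
  refine (Finset.prod_le_prod (fun _ _ => norm_nonneg _) fun i _ => h1 i).trans (le_of_eq ?_)
  rw [Finset.prod_prod_Ioi_mul_eq_prod_prod_off_diag fun i _ => 1 + ‖z i‖]
  have h2 : ∀ i, (∏ j ∈ ({i}ᶜ : Finset (Fin (n + 1))), (1 + ‖z j‖)) * (1 + ‖z i‖) =
      ∏ j, (1 + ‖z j‖) := by
    intro i
    rw [mul_comm, ← Finset.prod_mul_prod_compl {i} fun j => 1 + ‖z j‖, Finset.prod_singleton]
  have h3 : (∏ j, (1 + ‖z j‖)) ≠ 0 := Finset.prod_ne_zero_iff.2 fun j _ => by positivity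
  apply mul_right_cancel₀ h3
  rw [← Finset.prod_mul_distrib, Finset.prod_congr rfl fun i _ => h2 i, Finset.prod_const,
    Finset.card_univ, Fintype.card_fin, Finset.prod_pow, ← pow_succ]

end Summability

/-! ### Polynomial coefficient vectors and determinants -/

section Determinants

variable {n : ℕ}

/-- Value at `u` of the polynomial of degree `≤ n + 1` with coefficient vector `c`. -/
noncomputable def evalv (c : Fin (n + 2) → ℂ) (u : ℂ) : ℂ := ∑ m, c m * u ^ (m : ℕ)

/-- Coefficient vector of the polynomial `∏_i (s_i + t_i u)` in `u`. -/
noncomputable def pc (s t : Fin (n + 1) → ℂ) : Fin (n + 2) → ℂ :=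
  fun m => ∑ S ∈ Finset.powersetCard (m : ℕ) univ, (∏ i ∈ S, t i) * ∏ i ∈ univ \ S, s i

lemma evalv_pc (s t : Fin (n + 1) → ℂ) (u : ℂ) : evalv (pc s t) u = ∏ i, (s i + t i * u) := by
  have h : ∏ i, (s i + t i * u) = ∏ i, (t i * u + s i) :=
    Finset.prod_congr rfl fun i _ => add_comm _ _
  rw [h, Finset.prod_add, Finset.sum_powerset, Finset.card_univ, Fintype.card_fin,
    Finset.sum_range, evalv]
  refine Finset.sum_congr rfl fun m _ => ?_
  rw [pc, Finset.sum_mul]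
  refine Finset.sum_congr rfl fun S hS => ?_
  rw [Finset.prod_mul_distrib, Finset.prod_const, (Finset.mem_powersetCard.1 hS).2]
  ring

lemma pc_zero (s t : Fin (n + 1) → ℂ) : pc s t 0 = ∏ i, s i := by
  simp [pc]

lemma pc_last (s t : Fin (n + 1) → ℂ) : pc s t (Fin.last (n + 1)) = ∏ i, t i := by
  have : Finset.powersetCard (n + 1) (univ : Finset (Fin (n + 1))) = {univ} := by
    have := Finset.powersetCard_self (univ : Finset (Fin (n + 1)))
    rwa [Finset.card_univ, Fintype.card_fin] at this
  simp [pc, this]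

lemma norm_pc_le (z : Fin (n + 1) → ℂ) (m : Fin (n + 2)) :
    ‖pc z (fun _ => -1) m‖ ≤
      (Finset.powersetCard (m : ℕ) (univ : Finset (Fin (n + 1)))).card * ∏ i, (1 + ‖z i‖) := by
  rw [← nsmul_eq_mul]
  refine (norm_sum_le _ _).trans (Finset.sum_le_card_nsmul _ _ _ fun S _ => ?_)
  rw [norm_mul, norm_prod, norm_prod]
  simp only [norm_neg, norm_one, Finset.prod_const_one, one_mul]
  calc ∏ i ∈ univ \ S, ‖z i‖ ≤ ∏ i ∈ univ \ S, (1 + ‖z i‖) :=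
        Finset.prod_le_prod (fun _ _ => norm_nonneg _) fun i _ => by linarith
    _ ≤ ∏ i, (1 + ‖z i‖) := by
        rw [← Finset.prod_sdiff (Finset.subset_univ S)]
        refine le_mul_of_one_le_right (Finset.prod_nonneg fun i _ => by positivity) ?_
        exact Finset.one_le_prod fun i _ => by linarith [norm_nonneg (z i)]

lemma norm_evalv_le (c : Fin (n + 2) → ℂ) (u : ℂ) :
    ‖evalv c u‖ ≤ (∑ m, ‖c m‖) * (1 + ‖u‖) ^ (n + 1) := by
  rw [evalv, Finset.sum_mul]
  refine (norm_sum_le _ _).trans (Finset.sum_le_sum fun m _ => ?_)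
  rw [norm_mul, norm_pow]
  have h1 : ‖u‖ ^ (m : ℕ) ≤ (1 + ‖u‖) ^ (m : ℕ) :=
    pow_le_pow_left₀ (norm_nonneg _) (by linarith) _
  have h2 : (1 + ‖u‖) ^ (m : ℕ) ≤ (1 + ‖u‖) ^ (n + 1) :=
    pow_le_pow_right₀ (by linarith [norm_nonneg u]) (by omega)
  exact mul_le_mul_of_nonneg_left (h1.trans h2) (norm_nonneg _)

/-- A determinant of `n + 1` polynomials of degree `≤ n + 1` at `z` is the Vandermonde determinant
times a determinant of coefficients, in which the extra row is the polynomial `∏ (z_j - u)`. It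
follows by evaluating all `n + 2` polynomials at `z` and at one extra point, where `∏ (z_j - u)`
does not vanish. -/
lemma det_evalv (w : Fin (n + 1) → Fin (n + 2) → ℂ) (z : Fin (n + 1) → ℂ) :
    (Matrix.of fun i k => evalv (w k) (z i)).det =
      (Matrix.vandermonde z).det *
        (Matrix.of (Fin.cons (pc z fun _ => -1) w : Fin (n + 2) → Fin (n + 2) → ℂ)).det := by
  obtain ⟨u, hu⟩ := Infinite.exists_notMem_finset (Finset.univ.image z)
  have hu' : ∏ j, (z j - u) ≠ 0 := by
    refine Finset.prod_ne_zero_iff.2 fun j _ h => hu ?_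
    exact Finset.mem_image.2 ⟨j, Finset.mem_univ _, sub_eq_zero.1 h⟩
  set C : Matrix (Fin (n + 2)) (Fin (n + 2)) ℂ :=
    Matrix.of (Fin.cons (pc z fun _ => -1) w : Fin (n + 2) → Fin (n + 2) → ℂ) with hC
  set y : Fin (n + 2) → ℂ := Fin.cons u z with hy
  have h1 : Matrix.vandermonde y * C.transpose = Matrix.of fun i k => evalv (C k) (y i) := by
    ext i k
    simp only [Matrix.mul_apply, Matrix.vandermonde_apply, Matrix.transpose_apply,
      Matrix.of_apply, evalv]
    exact Finset.sum_congr rfl fun m _ => mul_comm _ _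
  have h2 := congrArg Matrix.det h1
  rw [Matrix.det_mul, Matrix.det_transpose,
    Matrix.det_succ_column_zero (Matrix.of fun i k => evalv (C k) (y i)), Fin.sum_univ_succ] at h2
  have hC0 : C 0 = pc z fun _ => -1 := rfl
  have hCs : ∀ k, C (Fin.succ k) = w k := fun k => rfl
  have h3 : ∀ i, evalv (C 0) (y (Fin.succ i)) = 0 := by
    intro i
    rw [hC0, evalv_pc]
    refine Finset.prod_eq_zero (Finset.mem_univ i) ?_
    simp [hy]
  have h4 : evalv (C 0) (y 0) = ∏ j, (z j - u) := by
    rw [hC0, evalv_pc]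
    refine Finset.prod_congr rfl fun j _ => ?_
    simp [hy]; ring
  have h5 : (Matrix.vandermonde y).det = (∏ j, (z j - u)) * (Matrix.vandermonde z).det := by
    rw [Matrix.det_vandermonde, Matrix.det_vandermonde, Fin.prod_univ_succ]
    congr 1
    · rw [Fin.prod_Ioi_zero]
      simp [hy]
    · refine Finset.prod_congr rfl fun i _ => ?_
      rw [Fin.prod_Ioi_succ]
      simp [hy]
  simp only [Matrix.of_apply, h3, h4, mul_zero, zero_mul, Finset.sum_const_zero, add_zero,
    Fin.val_zero, pow_zero, one_mul, h5] at h2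
  have h6 : ((Matrix.of fun i k => evalv (C k) (y i)).submatrix (Fin.succAbove 0) Fin.succ) =
      Matrix.of fun i k => evalv (w k) (z i) := by
    ext i k
    simp [hCs, hy]
  rw [h6] at h2
  apply mul_left_cancel₀ hu'
  rw [← h2]; ring

lemma exists_extend {V : Type*} [AddCommGroup V] [Module ℂ V] [FiniteDimensional ℂ V] {k : ℕ}
    (v : Fin k → V) (hv : LinearIndependent ℂ v) :
    ∀ j, k + j ≤ Module.finrank ℂ V → ∃ v' : Fin (k + j) → V, LinearIndependent ℂ v' ∧
      ∀ i : Fin k, v' (Fin.castAdd j i) = v i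
  | 0, _ => ⟨v, hv, fun _ => rfl⟩
  | j + 1, hj => by
    obtain ⟨v', h1, h2⟩ := exists_extend v hv j (by omega)
    obtain ⟨x, hx⟩ := exists_linearIndependent_snoc_of_lt_finrank h1 (by omega)
    refine ⟨Fin.snoc v' x, hx, fun i => ?_⟩
    rw [← h2 i]
    exact Fin.snoc_castSucc (α := fun _ => V) x v' (Fin.castAdd j i)

/-- If every determinant with rows `P, α, β, …` vanishes, then `P` is a combination of `α, β`. -/
lemma mem_span_of_det {m : ℕ} (P α β : Fin (m + 3) → ℂ) (hab : LinearIndependent ℂ ![α, β])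
    (h : ∀ w : Fin (m + 2) → Fin (m + 3) → ℂ, w 0 = α → w 1 = β →
      (Matrix.of (Fin.cons P w : Fin (m + 3) → Fin (m + 3) → ℂ)).det = 0) :
    ∃ κ μ : ℂ, P = κ • α + μ • β := by
  by_contra hP
  have h3 : LinearIndependent ℂ (Fin.cons P ![α, β] : Fin 3 → Fin (m + 3) → ℂ) := by
    rw [linearIndependent_finCons]
    refine ⟨hab, fun hmem => hP ?_⟩
    rw [Matrix.range_cons, Matrix.range_cons, Matrix.range_empty, Set.union_empty,
      Set.singleton_union, Submodule.mem_span_pair] at hmem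
    obtain ⟨κ, μ, e⟩ := hmem
    exact ⟨κ, μ, e.symm⟩
  obtain ⟨v, hv, he⟩ := exists_extend _ h3 m (by simp; omega)
  have hcast : m + 3 = 3 + m := by omega
  let v' : Fin (m + 3) → Fin (m + 3) → ℂ := fun i => v (Fin.cast hcast i)
  have hv' : LinearIndependent ℂ v' := hv.comp _ (Fin.cast_injective hcast)
  have e0 : v' 0 = P := he 0
  have e1 : v' 1 = α := by
    refine Eq.trans ?_ (he 1)
    exact congrArg v (Fin.ext (by simp))
  have e2 : v' 2 = β := by
    refine Eq.trans ?_ (he 2)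
    exact congrArg v (Fin.ext (by simp))
  have hd := h (fun i => v' i.succ) e1 e2
  have hc : (Fin.cons P (fun i => v' i.succ) : Fin (m + 3) → Fin (m + 3) → ℂ) = v' := by
    rw [← e0]
    exact Fin.cons_self_tail v'
  rw [hc] at hd
  have hu : IsUnit (Matrix.of v') :=
    Matrix.linearIndependent_rows_iff_isUnit.1 hv'
  rw [Matrix.isUnit_iff_isUnit_det, hd] at hu
  exact not_isUnit_zero hu

end Determinants

/-! ### The linear relation between the sums -/

section Relation

variable {q : ℝ} {n : ℕ}

lemma summable_Phi_mul (hq0 : 0 < q) (hq1 : q < 1) {a b X : Fin (n + 1) → ℂ}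
    (hX : ∀ i, X i ≠ 0) (hab : ‖(∏ i, a i) * ∏ i, b i‖ < 1) {y : (Fin n → ℤ) → ℂ} {C : ℝ}
    (hy : ∀ ν, ‖y ν‖ ≤ C * ∏ i, (1 + ‖zz q X ν i‖) ^ (n + 1)) :
    Summable fun ν => Phi q a b (zz q X ν) * y ν := by
  have hm : Summable (maj q (n + 1) (fun i => ‖a i‖) (fun i => ‖b i‖) X) := by
    refine summable_maj hq0 hq1 _ (fun i => norm_nonneg _) (fun i => norm_nonneg _) hX ?_
    rw [← norm_prod, ← norm_prod, mul_assoc, ← norm_mul]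
    exact mul_lt_of_lt_one_right (by positivity) hab
  exact (hm.mul_left C).of_norm_bounded fun ν =>
    norm_Phi_mul_le hq0 hq1 (fun _ => le_rfl) (fun _ => le_rfl) _ X ν (hy ν)

lemma summable_ff_mul (hq0 : 0 < q) (hq1 : q < 1) {a b X : Fin (n + 1) → ℂ}
    (hX : ∀ i, X i ≠ 0) (hXX : ∀ i j, i ≠ j → ∀ m : ℤ, X i / X j ≠ (q : ℂ) ^ m)
    (hab : ‖(∏ i, a i) * ∏ i, b i‖ < 1) {y : (Fin n → ℤ) → ℂ} {C : ℝ}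
    (hy : ∀ ν, ‖y ν‖ ≤ C * ∏ i, (1 + ‖zz q X ν i‖)) :
    Summable fun ν => ff q a b (zz q X ν) * y ν := by
  have h : ∀ ν, ff q a b (zz q X ν) * y ν =
      Phi q a b (zz q X ν) * ((Matrix.vandermonde (zz q X ν)).det * y ν) := by
    intro ν
    rw [ff_eq _ _ _ _ (zz_inj hq0 hX hXX ν), mul_assoc]
  simp only [h]
  refine summable_Phi_mul hq0 hq1 hX hab (C := C) fun ν => ?_
  rw [norm_mul]
  have h1 := norm_vandermonde_le (zz q X ν)
  calc _ ≤ (∏ i, (1 + ‖zz q X ν i‖) ^ n) * (C * ∏ i, (1 + ‖zz q X ν i‖)) :=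
        mul_le_mul h1 (hy ν) (norm_nonneg _) ((norm_nonneg _).trans h1)
    _ = _ := by
        simp only [pow_succ, Finset.prod_mul_distrib]; ring

/-- Coefficients of `∏ (1 - a_k u)`. -/
noncomputable def alphav (a : Fin (n + 1) → ℂ) : Fin (n + 2) → ℂ := pc (fun _ => 1) fun k => -a k

/-- Coefficients of `∏ (u - b_k)`. -/
noncomputable def betav (b : Fin (n + 1) → ℂ) : Fin (n + 2) → ℂ := pc (fun k => -b k) fun _ => 1

/-- Antisymmetrization of the basic relation `Phi_rt`: the sum of `Phi` against a determinant two
of whose rows are `∏ (1 - a_k u)` and `∏ (u - b_k)` vanishes. -/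
lemma tsum_det_eq_zero (hq0 : 0 < q) (hq1 : q < 1) {a b X : Fin (n + 1) → ℂ}
    (hX : ∀ i, X i ≠ 0) (hab : ‖(∏ i, a i) * ∏ i, b i‖ < 1)
    (w : Fin (n + 1) → Fin (n + 2) → ℂ) {i₀ i₁ : Fin (n + 1)} (hi : i₀ ≠ i₁)
    (h0 : w i₀ = alphav a) (h1 : w i₁ = betav b) :
    ∑' ν, Phi q a b (zz q X ν) * (Matrix.of fun i k => evalv (w k) (zz q X ν i)).det = 0 := by
  set t : Equiv.Perm (Fin (n + 1)) → (Fin n → ℤ) → ℂ := fun σ ν =>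
    Phi q a b (zz q X ν) * ∏ k, evalv (w k) (zz q X ν (σ k)) with ht
  have hs : ∀ σ, Summable (t σ) := by
    intro σ
    refine summable_Phi_mul hq0 hq1 hX hab (C := ∏ k, ∑ m, ‖w k m‖) fun ν => ?_
    rw [norm_prod, ← Equiv.prod_comp σ fun i => (1 + ‖zz q X ν i‖) ^ (n + 1),
      ← Finset.prod_mul_distrib]
    exact Finset.prod_le_prod (fun _ _ => norm_nonneg _) fun k _ => norm_evalv_le _ _
  have hsw : ∀ σ, ∑' ν, t (σ * Equiv.swap i₀ i₁) ν = ∑' ν, t σ ν := by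
    intro σ
    have hij : σ i₀ ≠ σ i₁ := fun h => hi (σ.injective h)
    rw [← (Equiv.addRight (rt (σ i₀) (σ i₁))).tsum_eq (t σ)]
    refine tsum_congr fun ν => ?_
    have split : ∀ g : Fin (n + 1) → ℂ,
        ∏ k, g k = g i₀ * g i₁ * ∏ k ∈ (univ.erase i₀).erase i₁, g k := by
      intro g
      rw [mul_assoc, Finset.mul_prod_erase _ _ (by simp [hi.symm]),
        Finset.mul_prod_erase _ _ (by simp)]
    simp only [ht, Equiv.coe_addRight]
    rw [split, split fun k => evalv (w k) (zz q X (ν + rt (σ i₀) (σ i₁)) (σ k))]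
    have ho : ∏ k ∈ (univ.erase i₀).erase i₁,
          evalv (w k) (zz q X ν ((σ * Equiv.swap i₀ i₁) k)) =
        ∏ k ∈ (univ.erase i₀).erase i₁, evalv (w k) (zz q X (ν + rt (σ i₀) (σ i₁)) (σ k)) := by
      refine Finset.prod_congr rfl fun k hk => ?_
      simp only [Finset.mem_erase, Finset.mem_univ, and_true] at hk
      rw [Equiv.Perm.mul_apply, Equiv.swap_apply_of_ne_of_ne hk.2 hk.1,
        zz_rt_other X ν (fun h => hk.2 (σ.injective h)) fun h => hk.1 (σ.injective h)]
    rw [ho, Equiv.Perm.mul_apply, Equiv.Perm.mul_apply, Equiv.swap_apply_left,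
      Equiv.swap_apply_right, h0, h1, alphav, betav, evalv_pc, evalv_pc, evalv_pc, evalv_pc]
    have key := Phi_rt hq0 hq1 a b hX ν hij
    rw [← mul_assoc, ← mul_assoc, ← mul_assoc, ← mul_assoc, key]
    ring
  have hdet : ∀ ν, Phi q a b (zz q X ν) * (Matrix.of fun i k => evalv (w k) (zz q X ν i)).det =
      ∑ σ : Equiv.Perm (Fin (n + 1)), ((Equiv.Perm.sign σ : ℤ) : ℂ) * t σ ν := by
    intro ν
    rw [Matrix.det_apply', Finset.mul_sum]
    refine Finset.sum_congr rfl fun σ _ => ?_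
    simp only [ht, Matrix.of_apply]
    ring
  simp only [hdet]
  rw [Summable.tsum_finsetSum fun σ _ => (hs σ).mul_left _]
  simp only [tsum_mul_left]
  have hneg : ∑ σ : Equiv.Perm (Fin (n + 1)), ((Equiv.Perm.sign σ : ℤ) : ℂ) * ∑' ν, t σ ν =
      -∑ σ : Equiv.Perm (Fin (n + 1)), ((Equiv.Perm.sign σ : ℤ) : ℂ) * ∑' ν, t σ ν := by
    conv_lhs => rw [← Equiv.sum_comp (Equiv.mulRight (Equiv.swap i₀ i₁))]
    rw [← Finset.sum_neg_distrib]
    refine Finset.sum_congr rfl fun σ _ => ?_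
    rw [Equiv.coe_mulRight, hsw, Equiv.Perm.sign_mul, Equiv.Perm.sign_swap hi]
    simp
  exact self_eq_neg.1 hneg

lemma summable_ff_pc (hq0 : 0 < q) (hq1 : q < 1) {a b X : Fin (n + 1) → ℂ}
    (hX : ∀ i, X i ≠ 0) (hXX : ∀ i j, i ≠ j → ∀ m : ℤ, X i / X j ≠ (q : ℂ) ^ m)
    (hab : ‖(∏ i, a i) * ∏ i, b i‖ < 1) (m : Fin (n + 2)) :
    Summable fun ν => ff q a b (zz q X ν) * pc (zz q X ν) (fun _ => -1) m :=
  summable_ff_mul hq0 hq1 hX hXX hab fun _ => norm_pc_le _ m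

/-- The coefficient vector of the averaged polynomial `∑_ν ff(z) ∏_j (z_j - u)` is a linear
combination of those of `∏ (1 - a_k u)` and `∏ (u - b_k)`. -/
lemma tsum_pc_mem (hq0 : 0 < q) (hq1 : q < 1) (hn : 1 ≤ n) {a b X : Fin (n + 1) → ℂ}
    (hX : ∀ i, X i ≠ 0) (hXX : ∀ i j, i ≠ j → ∀ m : ℤ, X i / X j ≠ (q : ℂ) ^ m)
    (hab : ‖(∏ i, a i) * ∏ i, b i‖ < 1) :
    ∃ κ μ : ℂ, (fun m => ∑' ν, ff q a b (zz q X ν) * pc (zz q X ν) (fun _ => -1) m) =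
      κ • alphav a + μ • betav b := by
  obtain ⟨k, rfl⟩ : ∃ k, n = k + 1 := ⟨n - 1, by omega⟩
  have hsum := summable_ff_pc hq0 hq1 hX hXX hab
  refine mem_span_of_det _ _ _ ?_ fun w h0 h1 => ?_
  · rw [LinearIndependent.pair_iff]
    intro s t hst
    have e0 := congrFun hst 0
    have e1 := congrFun hst (Fin.last (k + 2))
    simp only [Pi.add_apply, Pi.smul_apply, smul_eq_mul, Pi.zero_apply, alphav, betav, pc_zero,
      pc_last, Finset.prod_const_one, mul_one] at e0 e1
    have hne : 1 - (∏ i, -a i) * ∏ i, -b i ≠ 0 := by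
      intro h
      have : ‖(∏ i, -a i) * ∏ i, -b i‖ = 1 := by rw [← sub_eq_zero.1 h, norm_one]
      simp only [norm_mul, norm_prod, norm_neg] at this hab
      exact hab.ne this
    have hs : s * (1 - (∏ i, -a i) * ∏ i, -b i) = 0 := by
      linear_combination e0 - (∏ i, -b i) * e1
    have hs0 := (mul_eq_zero.1 hs).resolve_right hne
    refine ⟨hs0, ?_⟩
    rw [hs0] at e1
    simpa using e1
  · have key := tsum_det_eq_zero hq0 hq1 hX hab w (i₀ := 0) (i₁ := 1) (by simp) h0 h1
    have e : ∀ ν, Phi q a b (zz q X ν) * (Matrix.of fun i k => evalv (w k) (zz q X ν i)).det =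
        ∑ j : Fin (k + 3), (ff q a b (zz q X ν) * pc (zz q X ν) (fun _ => -1) j) *
          ((-1) ^ (j : ℕ) * ((Matrix.of w).submatrix id j.succAbove).det) := by
      intro ν
      rw [det_evalv, ← mul_assoc, ← ff_eq _ _ _ _ (zz_inj hq0 hX hXX ν), Matrix.det_succ_row_zero,
        Finset.mul_sum]
      refine Finset.sum_congr rfl fun j _ => ?_
      change ff q a b (zz q X ν) * ((-1) ^ (j : ℕ) * pc (zz q X ν) (fun _ => -1) j *
        ((Matrix.of w).submatrix id j.succAbove).det) = _
      ring
    simp only [e] at key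
    rw [Summable.tsum_finsetSum fun j _ => (hsum j).mul_right _] at key
    simp only [tsum_mul_right] at key
    rw [Matrix.det_succ_row_zero, ← key]
    refine Finset.sum_congr rfl fun j _ => ?_
    change (-1) ^ (j : ℕ) * (∑' ν, ff q a b (zz q X ν) * pc (zz q X ν) (fun _ => -1) j) *
        ((Matrix.of w).submatrix id j.succAbove).det = _
    ring

/-- The linear relation: inserting `∏_i (1 - a_{j₀} z_i)` multiplies the sum by an explicit
factor. -/
lemma FF_relation (hq0 : 0 < q) (hq1 : q < 1) (hn : 1 ≤ n) {a b X : Fin (n + 1) → ℂ}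
    (hX : ∀ i, X i ≠ 0) (hXX : ∀ i j, i ≠ j → ∀ m : ℤ, X i / X j ≠ (q : ℂ) ^ m)
    (hab : ‖(∏ i, a i) * ∏ i, b i‖ < 1) (j₀ : Fin (n + 1)) :
    (1 - (∏ i, a i) * ∏ i, b i) *
        ∑' ν, ff q a b (zz q X ν) * ∏ i, (1 - a j₀ * zz q X ν i) =
      (1 - (∏ i, a i) * ∏ i, X i) * (∏ j, (1 - a j₀ * b j)) * FF q a b X := by
  by_cases h0 : a j₀ = 0
  · have hA : ∏ i, a i = 0 := Finset.prod_eq_zero (Finset.mem_univ j₀) h0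
    simp [h0, hA, FF]
  obtain ⟨κ, μ, hP⟩ := tsum_pc_mem hq0 hq1 hn hX hXX hab
  have hsum := summable_ff_pc hq0 hq1 hX hXX hab
  have p0 := congrFun hP 0
  have p1 := congrFun hP (Fin.last (n + 1))
  simp only [Pi.add_apply, Pi.smul_apply, smul_eq_mul, alphav, betav, pc_zero,
    pc_last, Finset.prod_const_one, mul_one, zz_prod hq0, tsum_mul_right, Finset.prod_const,
    Finset.card_univ, Fintype.card_fin, Finset.prod_neg] at p0 p1
  change FF q a b X * _ = _ at p0
  change FF q a b X * _ = _ at p1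
  have ev : ∑' ν, ff q a b (zz q X ν) * ∏ i, (zz q X ν i + -1 * (a j₀)⁻¹) =
      κ * (∏ k, (1 + -a k * (a j₀)⁻¹)) + μ * ∏ k, (-b k + 1 * (a j₀)⁻¹) := by
    have e1 : ∀ ν, ff q a b (zz q X ν) * ∏ i, (zz q X ν i + -1 * (a j₀)⁻¹) =
        ∑ m : Fin (n + 2), ff q a b (zz q X ν) * pc (zz q X ν) (fun _ => -1) m *
          (a j₀)⁻¹ ^ (m : ℕ) := by
      intro ν
      rw [← evalv_pc (zz q X ν) (fun _ => -1), evalv, Finset.mul_sum]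
      exact Finset.sum_congr rfl fun m _ => by ring
    simp only [e1]
    rw [Summable.tsum_finsetSum fun m _ => (hsum m).mul_right _]
    simp only [tsum_mul_right]
    rw [← evalv_pc, ← evalv_pc, evalv, evalv, Finset.mul_sum, Finset.mul_sum,
      ← Finset.sum_add_distrib]
    refine Finset.sum_congr rfl fun m _ => ?_
    have := congrFun hP m
    simp only [Pi.add_apply, Pi.smul_apply, smul_eq_mul, alphav, betav] at this
    rw [this]; ring
  have z1 : ∏ k, (1 + -a k * (a j₀)⁻¹) = 0 :=
    Finset.prod_eq_zero (Finset.mem_univ j₀) (by field_simp; ring)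
  have z2 : ∏ k, (-b k + 1 * (a j₀)⁻¹) = (a j₀)⁻¹ ^ (n + 1) * ∏ k, (1 - a j₀ * b k) := by
    have hc : (a j₀)⁻¹ ^ (n + 1) = ∏ _k : Fin (n + 1), (a j₀)⁻¹ := by simp
    rw [hc, ← Finset.prod_mul_distrib]
    exact Finset.prod_congr rfl fun k _ => by field_simp; ring
  have z3 : ∀ ν, ∏ i, (zz q X ν i + -1 * (a j₀)⁻¹) =
      (-1) ^ (n + 1) * (a j₀)⁻¹ ^ (n + 1) * ∏ i, (1 - a j₀ * zz q X ν i) := by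
    intro ν
    have hc : (-1) ^ (n + 1) * (a j₀)⁻¹ ^ (n + 1) = ∏ _k : Fin (n + 1), (-1 * (a j₀)⁻¹) := by
      rw [Finset.prod_const, Finset.card_univ, Fintype.card_fin, mul_pow]
    rw [hc, ← Finset.prod_mul_distrib]
    exact Finset.prod_congr rfl fun k _ => by field_simp; ring
  rw [z1, z2, mul_zero, zero_add] at ev
  simp only [z3, mul_left_comm (ff _ _ _ _)] at ev
  rw [tsum_mul_left] at ev
  have hc : (a j₀)⁻¹ ^ (n + 1) ≠ 0 := pow_ne_zero _ (inv_ne_zero h0)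
  have hone : ((-1 : ℂ) ^ (n + 1)) * (-1) ^ (n + 1) = 1 := by
    rw [← mul_pow]; simp
  set S := ∑' ν, ff q a b (zz q X ν) * ∏ i, (1 - a j₀ * zz q X ν i)
  set e : ℂ := (-1) ^ (n + 1)
  have ev' : e * S = μ * ∏ k, (1 - a j₀ * b k) := by
    apply mul_left_cancel₀ hc
    linear_combination ev
  have hmu : μ * (1 - (∏ i, a i) * ∏ i, b i) =
      e * FF q a b X * (1 - (∏ i, a i) * ∏ i, X i) := by
    linear_combination e * (∏ i, a i) * p0 - p1 + μ * (∏ i, a i) * (∏ i, b i) * hone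
  have he : e ≠ 0 := left_ne_zero_of_mul_eq_one hone
  apply mul_left_cancel₀ he
  linear_combination (1 - (∏ i, a i) * ∏ i, b i) * ev' + (∏ k, (1 - a j₀ * b k)) * hmu

end Relation

/-! ### Evaluation of the sum -/

section Evaluation

open Filter Topology

variable {q : ℝ} {n : ℕ}

lemma prod_update_mul (a : Fin (n + 1) → ℂ) (j₀ : Fin (n + 1)) (c : ℂ) :
    ∏ i, Function.update a j₀ (c * a j₀) i = c * ∏ i, a i := by
  rw [← Finset.mul_prod_erase univ _ (Finset.mem_univ j₀),
    ← Finset.mul_prod_erase univ a (Finset.mem_univ j₀), Function.update_self, mul_assoc]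
  congr 2
  refine Finset.prod_congr rfl fun i hi => ?_
  rw [Function.update_of_ne (Finset.ne_of_mem_erase hi)]

lemma hh_update (hq0 : 0 < q) (hq1 : q < 1) (a b : Fin (n + 1) → ℂ) (j₀ : Fin (n + 1)) (u : ℂ) :
    hh q a b u = hh q (Function.update a j₀ (q * a j₀)) b u * (1 - q * a j₀ * u) := by
  unfold hh
  rw [← Finset.mul_prod_erase univ _ (Finset.mem_univ j₀),
    ← Finset.mul_prod_erase univ (fun j => qp q (q * Function.update a j₀ (q * a j₀) j * u) *
      qp q (q * b j * u⁻¹)) (Finset.mem_univ j₀)]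
  have h : ∏ j ∈ univ.erase j₀, qp q (q * Function.update a j₀ (q * a j₀) j * u) *
      qp q (q * b j * u⁻¹) = ∏ j ∈ univ.erase j₀, qp q (q * a j * u) * qp q (q * b j * u⁻¹) := by
    refine Finset.prod_congr rfl fun i hi => ?_
    rw [Function.update_of_ne (Finset.ne_of_mem_erase hi)]
  rw [h, Function.update_self, qp_step hq0 hq1 (q * a j₀ * u),
    show (q : ℂ) * (q * a j₀ * u) = q * (q * a j₀) * u by ring]
  ring

/-- The `q`-difference equation of the sum in one of the parameters. -/
lemma FF_shift (hq0 : 0 < q) (hq1 : q < 1) (hn : 1 ≤ n) {a b X : Fin (n + 1) → ℂ}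
    (hX : ∀ i, X i ≠ 0) (hXX : ∀ i j, i ≠ j → ∀ m : ℤ, X i / X j ≠ (q : ℂ) ^ m)
    (hab : ‖q * ((∏ i, a i) * ∏ i, b i)‖ < 1) (j₀ : Fin (n + 1)) :
    FF q a b X * (1 - q * ((∏ i, a i) * ∏ i, b i)) =
      (1 - q * ((∏ i, a i) * ∏ i, X i)) * (∏ j, (1 - q * (a j₀ * b j))) *
        FF q (Function.update a j₀ (q * a j₀)) b X := by
  have h := FF_relation hq0 hq1 hn (a := Function.update a j₀ (q * a j₀)) (b := b) hX hXX
    (by rwa [prod_update_mul, mul_assoc]) j₀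
  rw [prod_update_mul, Function.update_self] at h
  have e : ∀ ν, ff q (Function.update a j₀ (q * a j₀)) b (zz q X ν) *
      ∏ i, (1 - q * a j₀ * zz q X ν i) = ff q a b (zz q X ν) := by
    intro ν
    simp only [ff, hh_update hq0 hq1 a b j₀, Finset.prod_mul_distrib]
    ring
  simp only [e] at h
  change _ * FF q a b X = _ at h
  simp only [mul_assoc] at h ⊢
  rw [mul_comm]
  exact h

lemma FF_shift_iter (hq0 : 0 < q) (hq1 : q < 1) (hn : 1 ≤ n) {a b X : Fin (n + 1) → ℂ}
    (hX : ∀ i, X i ≠ 0) (hXX : ∀ i j, i ≠ j → ∀ m : ℤ, X i / X j ≠ (q : ℂ) ^ m)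
    (hab : ‖q * ((∏ i, a i) * ∏ i, b i)‖ < 1) (j₀ : Fin (n + 1)) (k : ℕ) :
    FF q a b X * ∏ i ∈ Finset.range k, (1 - (q : ℂ) ^ i * (q * (∏ i, a i) * ∏ i, b i)) =
      (∏ i ∈ Finset.range k, (1 - (q : ℂ) ^ i * (q * (∏ i, a i) * ∏ i, X i))) *
        (∏ j, ∏ i ∈ Finset.range k, (1 - (q : ℂ) ^ i * (q * a j₀ * b j))) *
        FF q (Function.update a j₀ (q ^ k * a j₀)) b X := by
  induction k with
  | zero => simp
  | succ k ih =>
    have hk : ‖(q : ℂ) ^ k‖ ≤ 1 := by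
      rw [norm_pow, Complex.norm_real, Real.norm_eq_abs, abs_of_pos hq0]
      exact pow_le_one₀ hq0.le hq1.le
    have hab' : ‖q * ((∏ i, Function.update a j₀ (q ^ k * a j₀) i) * ∏ i, b i)‖ < 1 := by
      rw [prod_update_mul, show (q : ℂ) * (q ^ k * (∏ i, a i) * ∏ i, b i) =
        q ^ k * (q * ((∏ i, a i) * ∏ i, b i)) by ring, norm_mul]
      exact lt_of_le_of_lt (mul_le_of_le_one_left (norm_nonneg _) hk) hab
    have h := FF_shift hq0 hq1 hn hX hXX hab' j₀
    rw [prod_update_mul, Function.update_self, Function.update_idem,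
      show (q : ℂ) * (q ^ k * a j₀) = q ^ (k + 1) * a j₀ by ring,
      show (q : ℂ) * (q ^ k * (∏ i, a i) * ∏ i, b i) =
        q ^ k * (q * (∏ i, a i) * ∏ i, b i) by ring,
      show (q : ℂ) * (q ^ k * (∏ i, a i) * ∏ i, X i) =
        q ^ k * (q * (∏ i, a i) * ∏ i, X i) by ring] at h
    have e : ∀ j, 1 - (q : ℂ) * (q ^ k * a j₀ * b j) = 1 - (q : ℂ) ^ k * (q * a j₀ * b j) := by
      intro j; ring
    simp only [e] at h
    simp only [Finset.prod_range_succ, Finset.prod_mul_distrib]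
    linear_combination (1 - (q : ℂ) ^ k * (q * (∏ i, a i) * ∏ i, b i)) * ih +
      (∏ i ∈ Finset.range k, (1 - (q : ℂ) ^ i * (q * (∏ i, a i) * ∏ i, X i))) *
        (∏ j, ∏ i ∈ Finset.range k, (1 - (q : ℂ) ^ i * (q * a j₀ * b j))) * h

lemma tendsto_FF (hq0 : 0 < q) (hq1 : q < 1) {a b X : Fin (n + 1) → ℂ}
    (hX : ∀ i, X i ≠ 0) (hXX : ∀ i j, i ≠ j → ∀ m : ℤ, X i / X j ≠ (q : ℂ) ^ m)
    (hab : ‖q * ((∏ i, a i) * ∏ i, b i)‖ < 1) (j₀ : Fin (n + 1)) :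
    Tendsto (fun k : ℕ => FF q (Function.update a j₀ ((q : ℂ) ^ k * a j₀)) b X) atTop
      (𝓝 (FF q (Function.update a j₀ 0) b X)) := by
  have hm : Summable (maj q n (fun i => ‖a i‖) (fun i => ‖b i‖) X) := by
    refine summable_maj hq0 hq1 _ (fun i => norm_nonneg _) (fun i => norm_nonneg _) hX ?_
    rw [norm_mul, norm_mul, Complex.norm_real, Real.norm_eq_abs, abs_of_pos hq0] at hab
    rw [← norm_prod, ← norm_prod, pow_succ, mul_assoc, mul_assoc]
    exact mul_lt_of_lt_one_right (by positivity) hab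
  unfold FF
  refine tendsto_tsum_of_dominated_convergence (hm.mul_left 1) (fun ν => ?_)
    (Eventually.of_forall fun k ν => ?_)
  · unfold ff
    refine Tendsto.div_const (tendsto_finsetProd _ fun i _ => ?_) _
    unfold hh
    refine tendsto_finsetProd _ fun j _ => Tendsto.mul_const _ ?_
    by_cases hj : j = j₀
    · subst hj
      simp only [Function.update_self]
      rw [mul_zero, zero_mul, qp_zero]
      refine (qp_tendsto_one hq0 hq1 (q * a j * zz q X ν i)).congr fun k => ?_
      congr 1; ring
    · simp only [Function.update_of_ne hj]
      exact tendsto_const_nhds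
  · rw [ff_eq _ _ _ _ (zz_inj hq0 hX hXX ν)]
    refine norm_Phi_mul_le hq0 hq1 (fun i => ?_) (fun _ => le_rfl) n X ν ?_
    · by_cases hi : i = j₀
      · subst hi
        rw [Function.update_self, norm_mul, norm_pow, Complex.norm_real, Real.norm_eq_abs,
          abs_of_pos hq0]
        exact mul_le_of_le_one_left (norm_nonneg _) (pow_le_one₀ hq0.le hq1.le)
      · rw [Function.update_of_ne hi]
    · rw [one_mul]
      exact norm_vandermonde_le _

/-- Iterating the `q`-difference equation removes one parameter. -/
lemma FF_zero_one (hq0 : 0 < q) (hq1 : q < 1) (hn : 1 ≤ n) {a b X : Fin (n + 1) → ℂ}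
    (hX : ∀ i, X i ≠ 0) (hXX : ∀ i j, i ≠ j → ∀ m : ℤ, X i / X j ≠ (q : ℂ) ^ m)
    (hab : ‖q * ((∏ i, a i) * ∏ i, b i)‖ < 1) (j₀ : Fin (n + 1)) :
    FF q a b X * qp q (q * (∏ i, a i) * ∏ i, b i) =
      qp q (q * (∏ i, a i) * ∏ i, X i) * (∏ j, qp q (q * a j₀ * b j)) *
        FF q (Function.update a j₀ 0) b X := by
  have hl : ∀ w : ℂ, Tendsto (fun k : ℕ => ∏ i ∈ Finset.range k, (1 - (q : ℂ) ^ i * w)) atTop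
      (𝓝 (qp q w)) := fun w => (multipliable_qp hq0 hq1 w).hasProd.tendsto_prod_nat
  refine tendsto_nhds_unique ((hl _).const_mul _) ?_
  simp only [FF_shift_iter hq0 hq1 hn hX hXX hab j₀]
  exact ((hl _).mul (tendsto_finsetProd _ fun j _ => hl _)).mul
    (tendsto_FF hq0 hq1 hX hXX hab j₀)

lemma FF_zero_finset (hq0 : 0 < q) (hq1 : q < 1) (hn : 1 ≤ n) {a b X : Fin (n + 1) → ℂ}
    (hX : ∀ i, X i ≠ 0) (hXX : ∀ i j, i ≠ j → ∀ m : ℤ, X i / X j ≠ (q : ℂ) ^ m)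
    {i₀ : Fin (n + 1)} (ha : a i₀ = 0) (s : Finset (Fin (n + 1))) :
    FF q a b X = (∏ i ∈ s, ∏ j, qp q (q * a i * b j)) *
      FF q (fun i => if i ∈ s then 0 else a i) b X := by
  induction s using Finset.induction_on with
  | empty => simp
  | insert i s hi ih =>
    set a' : Fin (n + 1) → ℂ := fun i => if i ∈ s then 0 else a i with ha'
    have hp : ∏ i, a' i = 0 := Finset.prod_eq_zero (Finset.mem_univ i₀) (by simp [ha', ha])
    have h := FF_zero_one hq0 hq1 hn (a := a') (b := b) hX hXX (by simp [hp]) i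
    have hu : Function.update a' i 0 = fun j => if j ∈ insert i s then 0 else a j := by
      ext j
      by_cases hj : j = i
      · subst hj; simp
      · simp [hj, ha']
    have hai : a' i = a i := by simp [ha', hi]
    rw [hp, mul_zero, zero_mul, zero_mul, qp_zero, mul_one, one_mul, hu, hai] at h
    rw [ih, h, Finset.prod_insert hi]
    ring

lemma FF_left (hq0 : 0 < q) (hq1 : q < 1) (hn : 1 ≤ n) {a b X : Fin (n + 1) → ℂ}
    (hX : ∀ i, X i ≠ 0) (hXX : ∀ i j, i ≠ j → ∀ m : ℤ, X i / X j ≠ (q : ℂ) ^ m)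
    (hab : ‖q * ((∏ i, a i) * ∏ i, b i)‖ < 1) :
    FF q a b X * qp q (q * (∏ i, a i) * ∏ i, b i) =
      qp q (q * (∏ i, a i) * ∏ i, X i) * (∏ i, ∏ j, qp q (q * a i * b j)) *
        FF q 0 b X := by
  have h1 := FF_zero_finset hq0 hq1 hn (a := Function.update a 0 0) (b := b) hX hXX (i₀ := 0)
    (by simp) univ
  have h0 : (fun i => if i ∈ (univ : Finset (Fin (n + 1))) then 0 else Function.update a 0 0 i) =
      (0 : Fin (n + 1) → ℂ) := by ext i; simp
  have hs : ∀ i : Fin n, Function.update a 0 0 i.succ = a i.succ := fun i =>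
    Function.update_of_ne (Fin.succ_ne_zero i) _ _
  rw [h0, Fin.prod_univ_succ] at h1
  simp only [hs, Function.update_self, mul_zero, zero_mul, qp_zero, Finset.prod_const_one,
    one_mul] at h1
  rw [FF_zero_one hq0 hq1 hn hX hXX hab 0, h1,
    Fin.prod_univ_succ (fun i => ∏ j, qp (q : ℂ) (q * a i * b j))]
  ring

lemma lam_neg (ν : Fin n → ℤ) : lam (-ν) = -lam ν := by
  ext i
  refine Fin.lastCases ?_ (fun i => ?_) i <;> simp [lam]

/-- The reflection `z ↦ z⁻¹` exchanges the two sets of parameters. -/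
lemma FF_inv (q : ℂ) (a b X : Fin (n + 1) → ℂ) : FF q a b X = FF q b a fun i => (X i)⁻¹ := by
  unfold FF
  rw [← (Equiv.neg (Fin n → ℤ)).tsum_eq (fun ν => ff q b a (zz q (fun i => (X i)⁻¹) ν))]
  refine tsum_congr fun ν => ?_
  have hz : zz q (fun i => (X i)⁻¹) (Equiv.neg (Fin n → ℤ) ν) = fun i => (zz q X ν i)⁻¹ := by
    ext i
    simp [zz, lam_neg, mul_comm]
  rw [hz, ff, ff]
  congr 1
  · refine Finset.prod_congr rfl fun i _ => Finset.prod_congr rfl fun j _ => ?_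
    rw [inv_inv, mul_comm]
  · unfold dn
    refine Finset.prod_congr rfl fun i _ => Finset.prod_congr rfl fun j _ => ?_
    rw [mul_comm, mul_div_assoc, mul_div_assoc, mul_div_assoc, mul_div_assoc, inv_div_inv,
      inv_div_inv]

lemma FF_eval (hq0 : 0 < q) (hq1 : q < 1) (hn : 1 ≤ n) {a b X : Fin (n + 1) → ℂ}
    (hX : ∀ i, X i ≠ 0) (hXX : ∀ i j, i ≠ j → ∀ m : ℤ, X i / X j ≠ (q : ℂ) ^ m)
    (hab : ‖q * ((∏ i, a i) * ∏ i, b i)‖ < 1) :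
    FF q a b X * qp q (q * (∏ i, a i) * ∏ i, b i) =
      FF q 0 0 X * (qp q (q * (∏ i, a i) * ∏ i, X i) * qp q (q * (∏ i, b i) * (∏ i, X i)⁻¹) *
        ∏ i, ∏ j, qp q (q * a i * b j)) := by
  have hX' : ∀ i, (X i)⁻¹ ≠ 0 := fun i => inv_ne_zero (hX i)
  have hXX' : ∀ i j, i ≠ j → ∀ m : ℤ, (X i)⁻¹ / (X j)⁻¹ ≠ (q : ℂ) ^ m := by
    intro i j hij m
    rw [inv_div_inv]
    exact hXX j i hij.symm m
  have h := FF_left hq0 hq1 hn (a := b) (b := 0) hX' hXX' (by simp)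
  rw [← FF_inv, ← FF_inv] at h
  simp only [Pi.zero_apply, mul_zero, qp_zero, Finset.prod_const_one, mul_one,
    Finset.prod_const, Finset.card_univ, Fintype.card_fin, Finset.prod_inv_distrib,
    zero_pow (Nat.succ_ne_zero n)] at h
  rw [FF_left hq0 hq1 hn hX hXX hab, h]
  ring

lemma qp_eq_zero (hq0 : 0 < q) (hq1 : q < 1) {w : ℂ} {i : ℕ} (h : (q : ℂ) ^ i * w = 1) :
    qp q w = 0 := by
  refine tendsto_nhds_unique (multipliable_qp hq0 hq1 w).hasProd.tendsto_prod_nat ?_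
  refine tendsto_const_nhds.congr' ?_
  filter_upwards [eventually_gt_atTop i] with k hk
  exact (Finset.prod_eq_zero (Finset.mem_range.2 hk) (by rw [h, sub_self])).symm

lemma dn_ne_zero (hq0 : 0 < q) (hq1 : q < 1) {X : Fin (n + 1) → ℂ}
    (hXX : ∀ i j, i ≠ j → ∀ m : ℤ, X i / X j ≠ (q : ℂ) ^ m) : dn q X ≠ 0 := by
  have hq : (q : ℂ) ≠ 0 := by exact_mod_cast hq0.ne'
  have key : ∀ i j, i ≠ j → qp q (q * X i / X j) ≠ 0 := by
    intro i j hij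
    refine qp_ne_zero hq0 hq1 _ fun k hk => hXX i j hij (-((k + 1 : ℕ) : ℤ)) ?_
    rw [zpow_neg, zpow_natCast]
    refine eq_inv_of_mul_eq_one_right ?_
    rw [← hk, pow_succ]; ring
  refine Finset.prod_ne_zero_iff.2 fun i _ => Finset.prod_ne_zero_iff.2 fun j hj => ?_
  have hij : i < j := by simpa using hj
  exact mul_ne_zero (key i j hij.ne) (key j i hij.ne')

/-- With `a_i = X_i⁻¹` and `b = 0` the sum reduces to the single term `λ = 0`, since any other `λ`
in the root lattice has a negative coordinate. -/
lemma FF_single (hq0 : 0 < q) (hq1 : q < 1) {X : Fin (n + 1) → ℂ} (hX : ∀ i, X i ≠ 0)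
    (hXX : ∀ i j, i ≠ j → ∀ m : ℤ, X i / X j ≠ (q : ℂ) ^ m) :
    FF q (fun i => (X i)⁻¹) 0 X = qp q q ^ (n + 1) := by
  have hq : (q : ℂ) ≠ 0 := by exact_mod_cast hq0.ne'
  unfold FF
  rw [tsum_eq_single 0]
  · have hz : zz q X (0 : Fin n → ℤ) = X := by
      ext i
      have : lam (0 : Fin n → ℤ) i = 0 := by
        refine Fin.lastCases ?_ (fun i => ?_) i <;> simp [lam]
      simp [zz, this]
    rw [hz, ff, div_eq_iff (dn_ne_zero hq0 hq1 hXX)]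
    have h1 : dn q X = ∏ i, ∏ j ∈ {i}ᶜ, qp q (q * (X j)⁻¹ * X i) := by
      rw [← Finset.prod_prod_Ioi_mul_eq_prod_prod_off_diag
        fun j i => qp (q : ℂ) (q * (X j)⁻¹ * X i)]
      refine Finset.prod_congr rfl fun i _ => Finset.prod_congr rfl fun j _ => ?_
      congr 1 <;> congr 1 <;> ring
    have h2 : ∀ i, hh q (fun i => (X i)⁻¹) 0 (X i) =
        qp q q * ∏ j ∈ {i}ᶜ, qp q (q * (X j)⁻¹ * X i) := by
      intro i
      rw [hh, ← Finset.prod_mul_prod_compl {i}, Finset.prod_singleton]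
      simp [qp_zero, mul_assoc, hX i]
    simp only [h2, h1, Finset.prod_mul_distrib, Finset.prod_const, Finset.card_univ,
      Fintype.card_fin]
  · intro ν hν
    obtain ⟨i, hi⟩ : ∃ i, lam ν i < 0 := by
      by_contra! hc
      have h0 := (Finset.sum_eq_zero_iff_of_nonneg fun i _ => hc i).1 (lam_sum ν)
      apply hν
      ext i
      have := h0 i.castSucc (Finset.mem_univ _)
      simpa [lam] using this
    have hzero : hh q (fun i => (X i)⁻¹) 0 (zz q X ν i) = 0 := by
      refine Finset.prod_eq_zero (Finset.mem_univ i) ?_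
      rw [qp_eq_zero hq0 hq1 (i := (-lam ν i - 1).toNat), zero_mul]
      have e : (q : ℂ) * (X i)⁻¹ * zz q X ν i = q ^ (1 + lam ν i) := by
        have := hX i
        rw [zz, zpow_add₀ hq, zpow_one]
        field_simp
      rw [e, ← zpow_natCast, ← zpow_add₀ hq, Int.toNat_of_nonneg (by omega)]
      rw [show -lam ν i - 1 + (1 + lam ν i) = 0 by ring, zpow_zero]
    rw [ff, Finset.prod_eq_zero (Finset.mem_univ i) hzero, zero_div]

/-- The Macdonald identity for `A_n⁽¹⁾`. -/
lemma FF_zero_zero (hq0 : 0 < q) (hq1 : q < 1) (hn : 1 ≤ n) {X : Fin (n + 1) → ℂ}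
    (hX : ∀ i, X i ≠ 0) (hXX : ∀ i j, i ≠ j → ∀ m : ℤ, X i / X j ≠ (q : ℂ) ^ m) :
    FF q 0 0 X = qp q q ^ n := by
  have h := FF_eval hq0 hq1 hn (a := fun i => (X i)⁻¹) (b := 0) hX hXX (by simp)
  have hd : (∏ i, X i) ≠ 0 := Finset.prod_ne_zero_iff.2 fun i _ => hX i
  rw [FF_single hq0 hq1 hX hXX] at h
  simp only [Pi.zero_apply, mul_zero, zero_mul, qp_zero, Finset.prod_const_one, mul_one,
    Finset.prod_const, Finset.card_univ, Fintype.card_fin, Finset.prod_inv_distrib,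
    zero_pow (Nat.succ_ne_zero n), inv_mul_cancel_right₀ hd] at h
  have hqp : qp q q ≠ 0 := by
    refine qp_ne_zero_of_norm_lt hq0 hq1 _ ?_
    rwa [Complex.norm_real, Real.norm_eq_abs, abs_of_pos hq0]
  apply mul_right_cancel₀ hqp
  rw [← h, pow_succ]

lemma gz_eq (hq0 : 0 < q) (d : ℂ) (x : Fin n → ℂ) (ν : Fin n → ℤ) :
    gz q d x ν = zz q (Fin.snoc x (d * (∏ k, x k)⁻¹) : Fin (n + 1) → ℂ) ν := by
  have hq : (q : ℂ) ≠ 0 := by exact_mod_cast hq0.ne'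
  have h : ∀ s : Finset (Fin n), ∏ i ∈ s, (q : ℂ) ^ ν i = (q : ℂ) ^ ∑ i ∈ s, ν i := by
    intro s
    induction s using Finset.induction_on with
    | empty => simp
    | insert i s hi ih => rw [Finset.prod_insert hi, Finset.sum_insert hi, zpow_add₀ hq, ih]
  ext i
  refine Fin.lastCases ?_ (fun i => ?_) i
  · simp [gz, zz, lam, Finset.prod_mul_distrib, h, zpow_neg]; ring
  · simp [gz, zz, lam]

end Evaluation

/-- Corollary 5.7: `𝒦(x)` in terms of `𝒦₀(x)`, and the Macdonald identity for
`A_n⁽¹⁾` in Milne's form. -/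
theorem gustafson_reg_via_macdonald
    (q : ℝ) (hq0 : 0 < q) (hq1 : q < 1) (n : ℕ) (hn : 1 ≤ n)
    (a b : Fin (n + 1) → ℂ) (ha : ∀ i, a i ≠ 0) (hb : ∀ i, b i ≠ 0)
    (d : ℂ) (hd : d ≠ 0)
    (hbal : (q : ℝ) < ‖(∏ i, a i) * ∏ i, b i‖)
    (x : Fin n → ℂ) (hx : ∀ i, x i ≠ 0)
    (hxx : ∀ i j, i < j → ∀ m : ℤ, x i / x j ≠ (q : ℂ) ^ m)
    (hxd : ∀ i, ∀ m : ℤ, x i * (∏ k, x k) * d⁻¹ ≠ (q : ℂ) ^ m) :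
    gReg (q : ℂ) d a b x =
        g0Sum (q : ℂ) d x *
          (qp (q : ℂ) ((q : ℂ) * (∏ i, a i)⁻¹ * d) *
              qp (q : ℂ) ((q : ℂ) * (∏ i, b i)⁻¹ * d⁻¹) *
              ∏ i, ∏ j, qp (q : ℂ) ((q : ℂ) * (a i)⁻¹ * (b j)⁻¹)) /
          qp (q : ℂ) ((q : ℂ) * (∏ i, a i)⁻¹ * (∏ i, b i)⁻¹) ∧
      g0Sum (q : ℂ) d x = (1 - (q : ℂ)) ^ n * qp (q : ℂ) (q : ℂ) ^ n := by
  have hq : (q : ℂ) ≠ 0 := by exact_mod_cast hq0.ne'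
  have hp : ∏ k, x k ≠ 0 := Finset.prod_ne_zero_iff.2 fun i _ => hx i
  set X : Fin (n + 1) → ℂ := Fin.snoc x (d * (∏ k, x k)⁻¹) with hXdef
  have hXc : ∀ i : Fin n, X i.castSucc = x i := by intro i; simp [hXdef]
  have hXl : X (Fin.last n) = d * (∏ k, x k)⁻¹ := by simp [hXdef]
  have hX : ∀ i, X i ≠ 0 := by
    intro i
    refine Fin.lastCases ?_ (fun i => ?_) i
    · rw [hXl]; exact mul_ne_zero hd (inv_ne_zero hp)
    · rw [hXc]; exact hx i
  have hXX' : ∀ i j, i < j → ∀ m : ℤ, X i / X j ≠ (q : ℂ) ^ m := by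
    intro i j
    refine Fin.lastCases (fun h => absurd h (Fin.le_last j).not_gt) (fun i => ?_) i
    refine Fin.lastCases (fun _ m => ?_) (fun j hij m => ?_) j
    · rw [hXc, hXl]
      convert hxd i m using 1
      field_simp
    · rw [hXc, hXc]
      exact hxx i j (Fin.castSucc_lt_castSucc_iff.1 hij) m
  have hXX : ∀ i j, i ≠ j → ∀ m : ℤ, X i / X j ≠ (q : ℂ) ^ m := by
    intro i j hij m
    rcases lt_or_gt_of_ne hij with h | h
    · exact hXX' i j h m
    · intro e
      refine hXX' j i h (-m) ?_
      rw [zpow_neg, ← e, inv_div]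
  have hXd : ∏ i, X i = d := by
    rw [Fin.prod_univ_castSucc, hXl]
    simp only [hXc]
    field_simp
  have hab : ‖(q : ℂ) * ((∏ i, (a i)⁻¹) * ∏ i, (b i)⁻¹)‖ < 1 := by
    rw [Finset.prod_inv_distrib, Finset.prod_inv_distrib, ← mul_inv, norm_mul, norm_inv,
      Complex.norm_real, Real.norm_eq_abs, abs_of_pos hq0, ← div_eq_mul_inv]
    exact (div_lt_one (hq0.trans hbal)).2 hbal
  have h1 : gReg (q : ℂ) d a b x =
      (1 - q) ^ n * FF q (fun i => (a i)⁻¹) (fun i => (b i)⁻¹) X := by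
    simp only [gReg, gRegTerm, FF, ff, hh, dn, gz_eq hq0, ← hXdef]
  have h2 : g0Sum (q : ℂ) d x = (1 - q) ^ n * FF q 0 0 X := by
    simp only [g0Sum, g0Term, FF, ff, hh, dn, gz_eq hq0, ← hXdef, Pi.zero_apply, mul_zero,
      zero_mul, qp_zero, mul_one, Finset.prod_const_one, one_div]
  have h3 := FF_eval hq0 hq1 hn hX hXX hab
  rw [hXd, Finset.prod_inv_distrib, Finset.prod_inv_distrib] at h3
  refine ⟨?_, ?_⟩
  · have hne : qp (q : ℂ) ((q : ℂ) * (∏ i, a i)⁻¹ * (∏ i, b i)⁻¹) ≠ 0 := by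
      refine qp_ne_zero_of_norm_lt hq0 hq1 _ ?_
      rwa [Finset.prod_inv_distrib, Finset.prod_inv_distrib, ← mul_assoc] at hab
    rw [eq_div_iff hne, h1, h2, mul_assoc, h3]
    ring
  · rw [h2, FF_zero_zero hq0 hq1 hn hX hXX]
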